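/- There exists n₀ ∈ ℕ such that for all n ≥ n₀ the following holds: if K, T ⊆ ℝ^n are convex bodies with T centrally symmetric, then N(T,K) ≤ 289^n · N((K-K)*, T*) and N((K-K)*, T*) ≤ 13^n · N(T,K), where K-K = {x - y : x,y ∈ K} is the difference body of K. -/

import Mathlib

/-!
The argument compares volumes. Maximal separated sets and the trivial union bound express covering
numbers through volumes of bodies, up to factors exponential in `n`, and volumes of polar bodies
are exchanged for volumes of the bodies themselves because the volume product `vol W * vol W°` is
the same for all symmetric bodies `W ⊆ ℝⁿ`, up to the factor `(25/8)ⁿ` (`SymBody.mahler`). This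
statement rests on an upper and a lower bound for the volume product, both proved for the Gaussian
integrals `∫ exp (-‖x‖_W²) = Γ(n/2 + 1) vol W` of the gauges of `W` and `W°`.

*Upper bound* (`santalo`). This is Santaló's inequality in Lehec's functional form: if
`f x * g y ≤ exp (-⟨x, y⟩)` and `f` is centred then `∫ f * ∫ g ≤ (2π)ⁿ`. The proof is by induction
on `n`. A hyperplane bisects the mass of `g`; a shear makes both halves of `g` centred in the
remaining coordinates; integrating over half-lines, with the one-dimensional Prékopa–Leindler
inequality in logarithmic coordinates (`half_line`), reduces each half to the lower dimension, with
the roles of `f` and `g` exchanged (`half_step`).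

*Lower bound* (`DualityMap.lower`). This plays the role of Kuperberg's inequality. Let `G` be the
gradient of half the square of a smooth norm. The map `S (x, x') = (x + x', G x - G x')` is a
bijection of `ℝⁿ × ℝⁿ`; let `nu` be the pull-back of Lebesgue measure under `S`. Since `G` is
homogeneous, `nu` is invariant under the hyperbolic dilations `(x, x') ↦ (eᵘ x, e⁻ᵘ x')`. Pull the
explicit integral of `exp (i⟨a, b⟩ - ε(|a|² + |b|²))` back by `S` and compose with a dilation: the
exponent is analytic in the dilation parameter, which may therefore be complex, and the integral
does not depend on it. Going from `0` to `iπ/4` turns the oscillating factor `exp (i⟨a, b⟩)` into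
the decaying factor `exp (-P)` with `P (x, x') = ⟨G x, x⟩ + ⟨G x', x'⟩`, and `4 P` dominates
`‖a‖² + ‖b‖²`, where the second norm is the dual one. Letting `ε → 0` gives the bound `(π/2)ⁿ` for
the product of the Gaussian integrals. An arbitrary norm is within a factor `5/4` of a smooth one,
the `(2k+2)`-norm of finitely many functionals with a small Euclidean term added to its square
(`SymBody.exists_dualityMap`).

*Covering.* For symmetric `B` there is a cover of `A` by `|Λ|` translates of `B` with
`|Λ| vol B ≤ 2ⁿ vol (A + B/2)` (`exists_cover`), while any cover satisfies
`vol A ≤ |Λ| sup vol (A ∩ (x + B))` (`volume_le_of_cover`). With `(A° ∩ B°)/2 ⊆ (A + B)°` and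
`SymBody.mahler` these give the two inequalities with the constants `4 * 25/8 ≤ 13` and
`72 * 25/8 ≤ 289`. Since `K` itself need not be symmetric, a translate of `K ∩ (c - K)` replaces it
for the first covering fact, where `vol (K - K) ≤ 9ⁿ vol (K ∩ (c - K))` for a suitable `c`
(`exists_symmetric_part`).
-/

open MeasureTheory Pointwise
open scoped ENNReal RealInnerProductSpace

noncomputable section

abbrev Euc (n : ℕ) := EuclideanSpace ℝ (Fin n)

/-- A convex body: a compact convex set with nonempty interior. -/
def IsConvexBody {n : ℕ} (K : Set (Euc n)) : Prop :=
  Convex ℝ K ∧ IsCompact K ∧ (interior K).Nonempty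

/-- The covering number `N(K,T)`: the least cardinality of a finite set `Λ`
with `K ⊆ Λ + T`.  It is `⊤` if no finite cover exists. -/
def coveringNumber {n : ℕ} (K T : Set (Euc n)) : ℕ∞ :=
  sInf {m : ℕ∞ | ∃ Λ : Finset (Euc n), (Λ.card : ℕ∞) = m ∧ K ⊆ ↑Λ + T}

/-- The polar body `K* = {x : ⟨x,y⟩ ≤ 1 for all y ∈ K}`. -/
def polarBody {n : ℕ} (K : Set (Euc n)) : Set (Euc n) :=
  {x | ∀ y ∈ K, ⟪x, y⟫ ≤ 1}

/-! ### One-dimensional Prékopa–Leindler inequality -/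

lemma bm_compact {A B D : Set ℝ} (hA : IsCompact A) (hB : IsCompact B) (hAn : A.Nonempty)
    (hBn : B.Nonempty) (h : ∀ a ∈ A, ∀ b ∈ B, a + b ∈ D) :
    volume A + volume B ≤ volume D := by
  have hα := hA.sSup_mem hAn
  have hβ := hB.sInf_mem hBn
  set α := sSup A
  set β := sInf B
  have h1 : volume ((fun x => β + x) '' A) = volume A := by simp
  have h2 : volume ((fun x => α + x) '' B) = volume B := by simp
  have hd : AEDisjoint volume ((fun x => β + x) '' A) ((fun x => α + x) '' B) := by
    refine measure_mono_null (t := {α + β}) ?_ (by simp)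
    rintro _ ⟨⟨a, ha, rfl⟩, ⟨b, hb, hab⟩⟩
    have h3 : a ≤ α := le_csSup hA.bddAbove ha
    have h4 : β ≤ b := csInf_le hB.bddBelow hb
    simp only [Set.mem_singleton_iff] at *
    linarith
  rw [← h1, ← h2, ← measure_union₀ ((hB.image (by fun_prop)).measurableSet.nullMeasurableSet) hd]
  refine measure_mono ?_
  rintro _ (⟨a, ha, rfl⟩ | ⟨b, hb, rfl⟩)
  · simpa [add_comm] using h a ha β hβ
  · exact h α hα b hb

/-- The Brunn–Minkowski inequality on the line: `|A| + |B| ≤ |A + B|`, with `D ⊇ A + B`. -/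
lemma bm_line {A B D : Set ℝ} (hA : MeasurableSet A) (hB : MeasurableSet B) (hAn : A.Nonempty)
    (hBn : B.Nonempty) (h : ∀ a ∈ A, ∀ b ∈ B, a + b ∈ D) :
    volume A + volume B ≤ volume D := by
  obtain ⟨a, ha⟩ := hAn
  obtain ⟨b, hb⟩ := hBn
  rw [hA.measure_eq_iSup_isCompact, hB.measure_eq_iSup_isCompact]
  simp only [iSup_and']
  refine ENNReal.biSup_add_biSup_le' (p := fun K => K ⊆ A ∧ IsCompact K)
    (q := fun K => K ⊆ B ∧ IsCompact K) ⟨∅, by simp⟩ ⟨∅, by simp⟩ ?_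
  rintro K ⟨hK, hKc⟩ L ⟨hL, hLc⟩
  have := bm_compact (D := D) (hKc.insert a) (hLc.insert b) (by simp) (by simp) (by
    intro x hx y hy
    refine h x ?_ y ?_
    · rcases hx with rfl | hx
      exacts [ha, hK hx]
    · rcases hy with rfl | hy
      exacts [hb, hL hy])
  exact (add_le_add (measure_mono (Set.subset_insert _ _))
    (measure_mono (Set.subset_insert _ _))).trans this

/-- Prékopa–Leindler for functions with supremum `1`, in the stronger form with the arithmetic mean:
apply Brunn–Minkowski to the level sets, all of which are nonempty below the level `1`. -/
lemma pl_core {U V W : ℝ → ℝ} (hU : Measurable U) (hV : Measurable V) (hW : Measurable W)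
    (U0 : ∀ t, 0 ≤ U t) (V0 : ∀ t, 0 ≤ V t) (W0 : ∀ t, 0 ≤ W t)
    (U1 : ∀ t, U t ≤ 1) (V1 : ∀ t, V t ≤ 1)
    (U2 : ∀ l < 1, ∃ t, l < U t) (V2 : ∀ l < 1, ∃ t, l < V t)
    (h : ∀ l, 0 < l → ∀ s t, l < U s → l < V t → l < W ((s + t) / 2)) :
    (∫⁻ t, ENNReal.ofReal (U t)) + ∫⁻ t, ENNReal.ofReal (V t)
      ≤ 2 * ∫⁻ t, ENNReal.ofReal (W t) := by
  rw [lintegral_eq_lintegral_meas_lt _ (.of_forall U0) hU.aemeasurable,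
    lintegral_eq_lintegral_meas_lt _ (.of_forall V0) hV.aemeasurable,
    lintegral_eq_lintegral_meas_lt _ (.of_forall W0) hW.aemeasurable]
  have key : ∀ l : ℝ, 0 < l → volume {a | l < U a} + volume {a | l < V a}
      ≤ 2 * volume {a | l < W a} := by
    intro l hl
    rcases lt_or_ge l 1 with h1 | h1
    · have := bm_line (D := {x | l < W (x / 2)}) (measurableSet_lt measurable_const hU)
        (measurableSet_lt measurable_const hV) (U2 l h1) (V2 l h1)
        (fun a ha b hb => h l hl a b ha hb)
      refine this.trans ?_
      have e : {x | l < W (x / 2)} = (fun x => (1/2 : ℝ) * x) ⁻¹' {a | l < W a} := by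
        ext x; simp [div_eq_inv_mul]
      rw [e, Real.volume_preimage_mul_left (by norm_num)]
      norm_num
    · have e1 : {a | l < U a} = ∅ := by
        ext x; simpa using (U1 x).trans h1
      have e2 : {a | l < V a} = ∅ := by
        ext x; simpa using (V1 x).trans h1
      simp [e1, e2]
  have mU : Measurable fun l : ℝ => volume {a | l < U a} :=
    Antitone.measurable fun l m hlm => measure_mono fun x hx => lt_of_le_of_lt hlm hx
  rw [← lintegral_add_left mU, ← lintegral_const_mul' _ _ (by simp)]
  exact setLIntegral_mono' measurableSet_Ioi fun l hl => key l hl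

lemma ennreal_amgm {a b c : ℝ≥0∞} (h : a + b ≤ 2 * c) : a * b ≤ c ^ 2 := by
  rcases eq_or_ne c ∞ with rfl | hc
  · simp
  have h2 : a + b ≠ ∞ := ne_top_of_le_ne_top (by finiteness) h
  have ha : a ≠ ∞ := fun h => by simp [h] at h2
  have hb : b ≠ ∞ := fun h => by simp [h] at h2
  lift a to NNReal using ha
  lift b to NNReal using hb
  lift c to NNReal using hc
  norm_cast at *
  have h' : (a : ℝ) + b ≤ 2 * c := by exact_mod_cast h
  have : (a : ℝ) * b ≤ c ^ 2 := by
    nlinarith [sq_nonneg ((a : ℝ) - b), a.coe_nonneg, b.coe_nonneg, c.coe_nonneg]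
  exact_mod_cast this

/-- Prékopa–Leindler for bounded functions: dividing `U` and `V` by their suprema reduces to the
normalized case. -/
lemma pl_bdd {U V W : ℝ → ℝ} (hU : Measurable U) (hV : Measurable V) (hW : Measurable W)
    (U0 : ∀ t, 0 ≤ U t) (V0 : ∀ t, 0 ≤ V t) (W0 : ∀ t, 0 ≤ W t)
    {M : ℝ} (U1 : ∀ t, U t ≤ M) (V1 : ∀ t, V t ≤ M)
    (h : ∀ s t, U s * V t ≤ W ((s + t) / 2) ^ 2) :
    (∫⁻ t, ENNReal.ofReal (U t)) * ∫⁻ t, ENNReal.ofReal (V t)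
      ≤ (∫⁻ t, ENNReal.ofReal (W t)) ^ 2 := by
  have bU : BddAbove (Set.range U) := ⟨M, by rintro _ ⟨t, rfl⟩; exact U1 t⟩
  have bV : BddAbove (Set.range V) := ⟨M, by rintro _ ⟨t, rfl⟩; exact V1 t⟩
  set α := ⨆ t, U t
  set β := ⨆ t, V t
  have hUα : ∀ t, U t ≤ α := le_ciSup bU
  have hVβ : ∀ t, V t ≤ β := le_ciSup bV
  rcases (le_trans (U0 0) (hUα 0)).eq_or_lt with hα | hα
  · have : ∀ t, U t = 0 := fun t => le_antisymm (hα ▸ hUα t) (U0 t)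
    simp [this]
  rcases (le_trans (V0 0) (hVβ 0)).eq_or_lt with hβ | hβ
  · have : ∀ t, V t = 0 := fun t => le_antisymm (hβ ▸ hVβ t) (V0 t)
    simp [this]
  set γ := √(α * β)
  have hγ : 0 < γ := by positivity
  have hγ2 : γ ^ 2 = α * β := Real.sq_sqrt (by positivity)
  have := pl_core (U := fun t => α⁻¹ * U t) (V := fun t => β⁻¹ * V t) (W := fun t => γ⁻¹ * W t)
    (by fun_prop) (by fun_prop) (by fun_prop)
    (fun t => mul_nonneg (by positivity) (U0 t)) (fun t => mul_nonneg (by positivity) (V0 t))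
    (fun t => mul_nonneg (by positivity) (W0 t))
    (fun t => by rw [inv_mul_le_iff₀ hα]; simpa using hUα t)
    (fun t => by rw [inv_mul_le_iff₀ hβ]; simpa using hVβ t)
    (fun l hl => by
      obtain ⟨t, ht⟩ := exists_lt_of_lt_ciSup (show α * l < ⨆ t, U t by
        change α * l < α; nlinarith)
      exact ⟨t, by rw [lt_inv_mul_iff₀ hα]; exact ht⟩)
    (fun l hl => by
      obtain ⟨t, ht⟩ := exists_lt_of_lt_ciSup (show β * l < ⨆ t, V t by
        change β * l < β; nlinarith)
      exact ⟨t, by rw [lt_inv_mul_iff₀ hβ]; exact ht⟩)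
    (fun l hl s t hs ht => by
      rw [lt_inv_mul_iff₀ hα] at hs
      rw [lt_inv_mul_iff₀ hβ] at ht
      rw [lt_inv_mul_iff₀ hγ]
      refine lt_of_pow_lt_pow_left₀ 2 (W0 _) (lt_of_lt_of_le ?_ (h s t))
      rw [mul_pow, hγ2]
      calc α * β * l ^ 2 = (α * l) * (β * l) := by ring
        _ < U s * V t := by gcongr)
  have := ennreal_amgm this
  simp only [ENNReal.ofReal_mul (inv_nonneg.2 hα.le), ENNReal.ofReal_mul (inv_nonneg.2 hβ.le),
    ENNReal.ofReal_mul (inv_nonneg.2 hγ.le)] at this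
  rw [lintegral_const_mul' _ _ (by simp), lintegral_const_mul' _ _ (by simp),
    lintegral_const_mul' _ _ (by simp), mul_pow, mul_mul_mul_comm,
    ← ENNReal.ofReal_mul (by positivity), ← ENNReal.ofReal_pow (by positivity), inv_pow, hγ2,
    ← mul_inv] at this
  refine (ENNReal.mul_le_mul_iff_right ?_ (by simp)).1 this
  simp only [ne_eq, ENNReal.ofReal_eq_zero, not_le]
  positivity

/-- The one-dimensional Prékopa–Leindler inequality with weights `1/2, 1/2`. -/
lemma pl {U V : ℝ → ℝ≥0∞} {W : ℝ → ℝ} (hU : Measurable U) (hV : Measurable V) (hW : Measurable W)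
    (W0 : ∀ t, 0 ≤ W t) (h : ∀ s t, U s * V t ≤ ENNReal.ofReal (W ((s + t) / 2) ^ 2)) :
    (∫⁻ t, U t) * ∫⁻ t, V t ≤ (∫⁻ t, ENNReal.ofReal (W t)) ^ 2 := by
  have sup : ∀ X : ℝ → ℝ≥0∞, Measurable X → ∫⁻ t, X t = ⨆ k : ℕ, ∫⁻ t, min (X t) k := by
    intro X hX
    rw [← lintegral_iSup (f := fun (k : ℕ) t => min (X t) (k : ℝ≥0∞))
      (fun k => hX.min measurable_const)
      (fun i j hij t => min_le_min le_rfl (Nat.cast_le.2 hij))]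
    refine lintegral_congr fun t => ?_
    refine le_antisymm ?_ (iSup_le fun k => min_le_left _ _)
    rcases eq_or_ne (X t) ∞ with hx | hx
    · simp [hx, ENNReal.iSup_natCast]
    · obtain ⟨k, hk⟩ := ENNReal.exists_nat_gt hx
      exact le_iSup_of_le k (by simp [hk.le])
  rw [sup U hU, sup V hV]
  rw [ENNReal.iSup_mul]
  refine iSup_le fun i => ?_
  rw [ENNReal.mul_iSup]
  refine iSup_le fun j => ?_
  have conv : ∀ (X : ℝ → ℝ≥0∞) (k : ℕ) (t : ℝ),
      min (X t) k = ENNReal.ofReal ((min (X t) k).toReal) := fun X k t =>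
    (ENNReal.ofReal_toReal (ne_top_of_le_ne_top (by simp) (min_le_right _ _))).symm
  have bd : ∀ (X : ℝ → ℝ≥0∞) (k : ℕ) (t : ℝ), (min (X t) k).toReal ≤ k := fun X k t =>
    ENNReal.toReal_le_of_le_ofReal (by positivity)
      (by rw [ENNReal.ofReal_natCast]; exact min_le_right _ _)
  rw [lintegral_congr (conv U i), lintegral_congr (conv V j)]
  refine pl_bdd (M := max i j) (hU.min measurable_const).ennreal_toReal
    (hV.min measurable_const).ennreal_toReal hW (fun _ => ENNReal.toReal_nonneg)
    (fun _ => ENNReal.toReal_nonneg) W0 (fun t => (bd U i t).trans (le_max_left _ _))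
    (fun t => (bd V j t).trans (le_max_right _ _)) fun s t => ?_
  rw [← ENNReal.toReal_mul]
  refine ENNReal.toReal_le_of_le_ofReal (by positivity) (le_trans ?_ (h s t))
  gcongr <;> exact min_le_left _ _

lemma lintegral_Ioi_exp (u : ℝ → ℝ≥0∞) :
    ∫⁻ r in Set.Ioi 0, u r = ∫⁻ t, ENNReal.ofReal (Real.exp t) * u (Real.exp t) := by
  rw [← Real.range_exp, ← Set.image_univ, lintegral_image_eq_lintegral_abs_deriv_mul
    MeasurableSet.univ (fun x _ => (Real.hasDerivAt_exp x).hasDerivWithinAt)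
    Real.exp_injective.injOn]
  simp

/-- Substituting `r = eᵗ` on both half-lines turns the product `r * s` into a sum of exponents, and
Prékopa–Leindler applies, with `exp (-r² / 2)` in the same coordinate, times `√k`, in the middle. -/
lemma half_line {u v : ℝ → ℝ≥0∞} (hu : Measurable u) (hv : Measurable v) {k : ℝ} (hk : 0 ≤ k)
    (h : ∀ r > 0, ∀ s > 0, u r * v s ≤ ENNReal.ofReal (k * Real.exp (-(r * s)))) :
    (∫⁻ r in Set.Ioi 0, u r) * (∫⁻ s in Set.Ioi 0, v s) ≤ ENNReal.ofReal (k * (Real.pi / 2)) := by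
  have hW : ∫⁻ t, ENNReal.ofReal (√k * (Real.exp t * Real.exp (-(1 / 2) * Real.exp t ^ 2)))
      = ENNReal.ofReal (√k * √(Real.pi / 2)) := by
    have := lintegral_Ioi_exp (fun r => ENNReal.ofReal (Real.exp (-(1/2) * r ^ 2)))
    simp_rw [ENNReal.ofReal_mul (Real.sqrt_nonneg k), ENNReal.ofReal_mul (Real.exp_nonneg _)]
    rw [lintegral_const_mul' _ _ (by simp), ← this, ← ofReal_integral_eq_lintegral_ofReal
      (integrable_exp_neg_mul_sq (by norm_num)).integrableOn
      (.of_forall fun _ => Real.exp_nonneg _), integral_gaussian_Ioi]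
    congr 2
    rw [show Real.pi / (1/2) = (Real.pi / 2) * 2 ^ 2 by ring, Real.sqrt_mul (by positivity),
      Real.sqrt_sq (by norm_num)]
    ring
  rw [lintegral_Ioi_exp u, lintegral_Ioi_exp v]
  refine (pl (W := fun t => √k * (Real.exp t * Real.exp (-(1 / 2) * Real.exp t ^ 2)))
    (by fun_prop) (by fun_prop) (by fun_prop) (fun t => by positivity) fun s t => ?_).trans_eq ?_
  · rw [mul_mul_mul_comm, ← ENNReal.ofReal_mul (by positivity)]
    refine (mul_le_mul_right (h _ (Real.exp_pos s) _ (Real.exp_pos t)) _).trans ?_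
    rw [← ENNReal.ofReal_mul (by positivity)]
    refine ENNReal.ofReal_le_ofReal (le_of_eq ?_)
    have e : Real.exp ((s + t) / 2) ^ 2 = Real.exp s * Real.exp t := by
      rw [← Real.exp_nat_mul, ← Real.exp_add]; congr 1; push_cast; ring
    rw [mul_pow, mul_pow, Real.sq_sqrt hk, e, ← Real.exp_nat_mul (-(1/2) * _)]
    rw [show ((2:ℕ):ℝ) * (-(1/2) * (Real.exp s * Real.exp t)) = -(Real.exp s * Real.exp t) by
      push_cast; ring]
    ring
  · rw [hW, ← ENNReal.ofReal_pow (by positivity), mul_pow, Real.sq_sqrt hk,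
      Real.sq_sqrt (by positivity)]

/-! ### Half-spaces and medians -/

/-- The functional Santaló inequality in dimension `n`. That `f` is centred is expressed by saying that
no exponential tilt `f e^{⟨c, ·⟩}` decreases its integral; for functions with finite exponential
moments this means that the barycentre is `0`, and it is the form in which it is used. -/
def SantaloAt (n : ℕ) : Prop :=
  ∀ f g : (Fin n → ℝ) → ℝ≥0∞, Measurable f → Measurable g →
    (∀ x y, f x * g y ≤ ENNReal.ofReal (Real.exp (-(x ⬝ᵥ y)))) →
    (∀ c, ∫⁻ x, f x ≤ ∫⁻ x, f x * ENNReal.ofReal (Real.exp (c ⬝ᵥ x))) →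
    (∀ c, ∫⁻ x, f x * ENNReal.ofReal (Real.exp (c ⬝ᵥ x)) ≠ ∞) →
    (∀ c, ∫⁻ x, g x * ENNReal.ofReal (Real.exp (c ⬝ᵥ x)) ≠ ∞) →
    (∫⁻ x, f x) * ∫⁻ x, g x ≤ ENNReal.ofReal ((2 * Real.pi) ^ n)

lemma measurable_dot {n : ℕ} (k : Fin n → ℝ) : Measurable fun y : Fin n → ℝ => k ⬝ᵥ y := by
  unfold dotProduct; fun_prop

lemma measurable_dot' {n : ℕ} (k : Fin n → ℝ) : Measurable fun y : Fin n → ℝ => y ⬝ᵥ k := by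
  unfold dotProduct; fun_prop

lemma lintegral_half {n : ℕ} {F : ℝ × (Fin n → ℝ) → ℝ≥0∞} (hF : Measurable F) :
    ∫⁻ p in {p : ℝ × (Fin n → ℝ) | 0 < p.1}, F p = ∫⁻ y, ∫⁻ s in Set.Ioi 0, F (s, y) := by
  have e : {p : ℝ × (Fin n → ℝ) | 0 < p.1} = Set.Ioi 0 ×ˢ Set.univ := by ext; simp
  rw [e, Measure.volume_eq_prod, ← Measure.prod_restrict, Measure.restrict_univ,
    lintegral_prod_symm' _ hF]

/-- Integrating out the first coordinate over the half-line reduces the inequality on a half-space to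
dimension `n`: by `half_line` the marginals satisfy the duality relation up to the factor `π/2`.
The induction hypothesis is applied with the marginals exchanged, because it is the half of `g` that
is centred in the last `n` coordinates. -/
lemma half_step {n : ℕ} (IH : SantaloAt n) {f g : ℝ × (Fin n → ℝ) → ℝ≥0∞}
    (mf : Measurable f) (mg : Measurable g)
    (h : ∀ r x s y, f (r, x) * g (s, y) ≤ ENNReal.ofReal (Real.exp (-(r * s + x ⬝ᵥ y))))
    (ef : ∀ k, ∫⁻ p, f p * ENNReal.ofReal (Real.exp (k ⬝ᵥ p.2)) ≠ ∞)
    (eg : ∀ k, ∫⁻ p, g p * ENNReal.ofReal (Real.exp (k ⬝ᵥ p.2)) ≠ ∞)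
    (hB : ∀ k, ∫⁻ p in {p | 0 < p.1}, g p
      ≤ ∫⁻ p in {p | 0 < p.1}, g p * ENNReal.ofReal (Real.exp (k ⬝ᵥ p.2))) :
    (∫⁻ p in {p | 0 < p.1}, f p) * (∫⁻ p in {p | 0 < p.1}, g p)
      ≤ ENNReal.ofReal ((2 * Real.pi) ^ (n + 1) / 4) := by
  have mexp : ∀ k : Fin n → ℝ, Measurable fun p : ℝ × (Fin n → ℝ) =>
      ENNReal.ofReal (Real.exp (k ⬝ᵥ p.2)) := fun k =>
    ((measurable_dot k).comp measurable_snd).exp.ennreal_ofReal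
  set F : (Fin n → ℝ) → ℝ≥0∞ := fun x => ∫⁻ r in Set.Ioi 0, f (r, x)
  set G : (Fin n → ℝ) → ℝ≥0∞ := fun x => ∫⁻ r in Set.Ioi 0, g (r, x)
  have mF : Measurable F := Measurable.lintegral_prod_left' mf
  have mG : Measurable G := Measurable.lintegral_prod_left' mg
  have marg : ∀ (u : ℝ × (Fin n → ℝ) → ℝ≥0∞), Measurable u → ∀ k,
      ∫⁻ y, (∫⁻ r in Set.Ioi 0, u (r, y)) * ENNReal.ofReal (Real.exp (k ⬝ᵥ y))
        = ∫⁻ p in {p | 0 < p.1}, u p * ENNReal.ofReal (Real.exp (k ⬝ᵥ p.2)) := by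
    intro u mu k
    rw [lintegral_half (F := fun p => u p * ENNReal.ofReal (Real.exp (k ⬝ᵥ p.2))) (mu.mul (mexp k))]
    refine lintegral_congr fun y => ?_
    exact (lintegral_mul_const' _ _ ENNReal.ofReal_ne_top).symm
  set κ : ℝ := Real.pi / 2 with hκ
  have κ0 : 0 < κ := by positivity
  have main := IH G (fun x => ENNReal.ofReal κ⁻¹ * F x) mG (mF.const_mul _) (by
      intro y x
      have h1 := half_line (u := fun r => f (r, x)) (v := fun s => g (s, y)) (by fun_prop)
        (by fun_prop) (k := Real.exp (-(x ⬝ᵥ y))) (Real.exp_nonneg _) (by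
          intro r _ s _
          refine (h r x s y).trans_eq ?_
          rw [neg_add_rev, Real.exp_add])
      calc G y * (ENNReal.ofReal κ⁻¹ * F x) = ENNReal.ofReal κ⁻¹ * (F x * G y) := by ring
        _ ≤ ENNReal.ofReal κ⁻¹ * ENNReal.ofReal (Real.exp (-(x ⬝ᵥ y)) * κ) := by gcongr
        _ = _ := by
          rw [← ENNReal.ofReal_mul (by positivity), dotProduct_comm]
          congr 1; field_simp)
    (by
      intro c
      rw [marg g mg]
      simp only [G]
      rw [← lintegral_half mg]
      exact hB c)
    (by
      intro c
      rw [marg g mg]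
      exact ne_top_of_le_ne_top (eg c) (setLIntegral_le_lintegral _ _))
    (by
      intro c
      simp_rw [mul_assoc]
      rw [lintegral_const_mul' _ _ (by simp), marg f mf]
      exact ENNReal.mul_ne_top (by simp)
        (ne_top_of_le_ne_top (ef c) (setLIntegral_le_lintegral _ _)))
  rw [lintegral_const_mul' _ _ (by simp)] at main
  rw [lintegral_half mf, lintegral_half mg]
  calc (∫⁻ y, F y) * ∫⁻ y, G y
      = ENNReal.ofReal κ * ((∫⁻ y, G y) * (ENNReal.ofReal κ⁻¹ * ∫⁻ y, F y)) := by
        rw [show ENNReal.ofReal κ * ((∫⁻ y, G y) * (ENNReal.ofReal κ⁻¹ * ∫⁻ y, F y))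
          = (ENNReal.ofReal κ * ENNReal.ofReal κ⁻¹) * ((∫⁻ y, F y) * ∫⁻ y, G y) by ring,
          ← ENNReal.ofReal_mul κ0.le, mul_inv_cancel₀ κ0.ne']
        simp
    _ ≤ ENNReal.ofReal κ * ENNReal.ofReal ((2 * Real.pi) ^ n) := by gcongr
    _ = _ := by rw [← ENNReal.ofReal_mul κ0.le]; congr 1; rw [hκ]; ring

/-- Jensen's inequality for the exponential: a centred `l` satisfies `∫ 1 ≤ ∫ exp l`. -/
lemma jensen_exp {α : Type*} [MeasurableSpace α] {μ : Measure α} [IsFiniteMeasure μ] {l : α → ℝ}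
    (hl : Integrable l μ) (h0 : ∫ x, l x ∂μ = 0) :
    μ Set.univ ≤ ∫⁻ x, ENNReal.ofReal (Real.exp (l x)) ∂μ := by
  by_cases hi : Integrable (fun x => Real.exp (l x)) μ
  · rw [← ofReal_integral_eq_lintegral_ofReal hi (.of_forall fun _ => Real.exp_nonneg _),
      ← ofReal_measureReal]
    refine ENNReal.ofReal_le_ofReal ?_
    have : ∫ x, (l x + 1) ∂μ ≤ ∫ x, Real.exp (l x) ∂μ :=
      integral_mono (hl.add (integrable_const _)) hi fun x => Real.add_one_le_exp _
    rw [integral_add hl (integrable_const _), h0] at this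
    simpa using this
  · have : ∫⁻ x, ENNReal.ofReal (Real.exp (l x)) ∂μ = ∞ := by
      by_contra hne
      refine hi ⟨(Real.continuous_exp.comp_aestronglyMeasurable hl.1), ?_⟩
      rw [hasFiniteIntegral_iff_ofReal (.of_forall fun _ => Real.exp_nonneg _)]
      exact lt_top_iff_ne_top.2 hne
    rw [this]; exact le_top

/-- A finite measure on the line which does not charge points has a median. -/
lemma exists_median (ρ : Measure ℝ) [IsFiniteMeasure ρ] [NullSingletonClass ρ] :
    ∃ z, ρ (Set.Ioi z) = ρ (Set.Iio z) := by
  have e0 : (fun z => ρ.real (Set.Iic z)) = fun z => ρ.real Set.univ - ρ.real (Set.Ici z) := by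
    funext w
    have : ρ.real (Set.Iic w) = ρ.real (Set.Iio w) := measureReal_congr Iio_ae_eq_Iic.symm
    rw [this, ← Set.compl_Ici, measureReal_compl measurableSet_Ici]
  have hc : Continuous fun z => ρ.real (Set.Iic z) := by
    rw [continuous_iff_continuousAt]
    intro z
    have h1 : ContinuousWithinAt (fun z => ρ.real (Set.Iic z)) (Set.Ici z) z := by
      have := tendsto_measure_biInter_gt (μ := ρ) (s := Set.Iic) (a := z)
        (fun r _ => nullMeasurableSet_Iic) (fun i j _ hij => Set.Iic_subset_Iic.2 hij)
        ⟨z + 1, by simp, by simp⟩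
      have e : (⋂ r > z, Set.Iic r) = Set.Iic z := by
        ext x; simp only [Set.mem_iInter, Set.mem_Iic]
        exact ⟨fun h => le_of_forall_gt_imp_ge_of_dense h, fun h r hr => h.trans hr.le⟩
      rw [e] at this
      rw [← continuousWithinAt_Ioi_iff_Ici]
      exact (ENNReal.tendsto_toReal (by simp)).comp this
    have h2 : ContinuousWithinAt (fun z => ρ.real (Set.Iic z)) (Set.Iic z) z := by
      rw [e0]
      refine continuousWithinAt_const.sub ?_
      have := tendsto_measure_biInter_gt (μ := ρ) (ι := ℝᵒᵈ) (s := fun r => Set.Ici (OrderDual.ofDual r))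
        (a := OrderDual.toDual z)
        (fun r _ => nullMeasurableSet_Ici) (fun i j _ hij => Set.Ici_subset_Ici.2 hij)
        ⟨OrderDual.toDual (z - 1), OrderDual.toDual_lt_toDual.2 (by linarith), by simp⟩
      have e : (⋂ r > OrderDual.toDual z, Set.Ici (OrderDual.ofDual r)) = Set.Ici z := by
        ext x; simp only [Set.mem_iInter, Set.mem_Ici]
        exact ⟨fun h => le_of_forall_lt_imp_le_of_dense h, fun h r hr => le_trans (le_of_lt hr) h⟩
      rw [e] at this
      rw [← continuousWithinAt_Iio_iff_Iic]
      exact (ENNReal.tendsto_toReal (by simp)).comp this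
    exact continuousAt_iff_continuous_left_right.2 ⟨h2, h1⟩
  have hbot := (ENNReal.tendsto_toReal (measure_ne_top ρ _)).comp (tendsto_measure_Ici_atBot ρ)
  have htop := (ENNReal.tendsto_toReal (measure_ne_top ρ _)).comp (tendsto_measure_Iic_atTop ρ)
  rcases eq_or_ne ρ 0 with rfl | hρ
  · exact ⟨0, by simp⟩
  have hpos : 0 < ρ.real Set.univ :=
    ENNReal.toReal_pos (by simpa using hρ) (measure_ne_top _ _)
  obtain ⟨z, hz⟩ := mem_range_of_exists_le_of_exists_ge (c := ρ.real Set.univ / 2) hc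
    (by
      have := (hbot.eventually (lt_mem_nhds (show ρ.real Set.univ / 2 < (ρ Set.univ).toReal by
        change ρ.real Set.univ / 2 < ρ.real Set.univ; linarith))).exists
      obtain ⟨a, ha⟩ := this
      refine ⟨a, ?_⟩
      rw [congrFun e0 a]
      change _ < ρ.real (Set.Ici a) at ha
      linarith)
    (by
      have := (htop.eventually (lt_mem_nhds (show ρ.real Set.univ / 2 < (ρ Set.univ).toReal by
        change ρ.real Set.univ / 2 < ρ.real Set.univ; linarith))).exists
      obtain ⟨a, ha⟩ := this
      exact ⟨a, le_of_lt ha⟩)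
  refine ⟨z, ?_⟩
  rw [← measureReal_eq_measureReal_iff, ← Set.compl_Iic, measureReal_compl measurableSet_Iic,
    measureReal_congr (Iio_ae_eq_Iic (μ := ρ) (a := z))]
  simp only at hz
  linarith

/-! ### Shears and the inductive step -/

lemma lintegral_shear {n : ℕ} (m : Fin n → ℝ) {σ : ℝ} (hσ : σ * σ = 1)
    {F : ℝ × (Fin n → ℝ) → ℝ≥0∞} (hF : Measurable F) :
    ∫⁻ p : ℝ × (Fin n → ℝ), F (σ * p.1 - p.2 ⬝ᵥ m, p.2) = ∫⁻ p, F p := by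
  have hm : Measurable fun p : ℝ × (Fin n → ℝ) => p.2 ⬝ᵥ m :=
    (measurable_dot' m).comp measurable_snd
  rw [Measure.volume_eq_prod, lintegral_prod_symm' _ hF, lintegral_prod_symm' _ (by fun_prop)]
  refine lintegral_congr fun x => ?_
  have h0 : σ = 1 ∨ σ = -1 := mul_self_eq_one_iff.1 hσ
  rcases h0 with rfl | rfl
  · simp only [one_mul]
    exact lintegral_sub_right_eq_self (fun t => F (t, x)) _
  · simp only [neg_mul, one_mul]
    rw [lintegral_neg_eq_self (fun t => F (t - x ⬝ᵥ m, x))]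
    exact lintegral_sub_right_eq_self (fun t => F (t, x)) _

lemma lintegral_shear' {n : ℕ} (m c : Fin n → ℝ) (z : ℝ) {σ : ℝ} (hσ : σ * σ = 1)
    {F : ℝ × (Fin n → ℝ) → ℝ≥0∞} (hF : Measurable F) :
    ∫⁻ p : ℝ × (Fin n → ℝ), F (z + σ * p.1, c + p.2 + (σ * p.1) • m) = ∫⁻ p, F p := by
  rw [Measure.volume_eq_prod, lintegral_prod _ hF.aemeasurable, lintegral_prod _ (by fun_prop)]
  have e : ∀ s : ℝ, ∫⁻ y, F (z + σ * s, c + y + (σ * s) • m) = ∫⁻ y, F (z + σ * s, y) := by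
    intro s
    rw [lintegral_add_left_eq_self (fun y => F (z + σ * s, y + (σ * s) • m)) c]
    exact lintegral_add_right_eq_self (fun y => F (z + σ * s, y)) _
  simp only [e]
  have h0 : σ = 1 ∨ σ = -1 := mul_self_eq_one_iff.1 hσ
  rcases h0 with rfl | rfl
  · simp only [one_mul]
    exact lintegral_add_left_eq_self (fun t => ∫⁻ y, F (t, y)) _
  · simp only [neg_mul, one_mul]
    rw [lintegral_neg_eq_self (fun t => ∫⁻ y, F (z + t, y))]
    exact lintegral_add_left_eq_self (fun t => ∫⁻ y, F (t, y)) _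

/-- `half_step` after an affine change of variables for `g`, which moves the hyperplane to height `z`
and shears along `m`, and the dual shear for `f`, which is also tilted by `(z, c)`. The sign `σ` selects the side of the hyperplane;
`c` is the height at which the axis of slope `m` meets the hyperplane. -/
lemma half_affine {n : ℕ} (IH : SantaloAt n) {f g : ℝ × (Fin n → ℝ) → ℝ≥0∞}
    (mf : Measurable f) (mg : Measurable g)
    (h : ∀ r x s y, f (r, x) * g (s, y) ≤ ENNReal.ofReal (Real.exp (-(r * s + x ⬝ᵥ y))))
    (ef : ∀ (t : ℝ) k, ∫⁻ p, f p * ENNReal.ofReal (Real.exp (t * p.1 + k ⬝ᵥ p.2)) ≠ ∞)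
    (eg : ∀ (t : ℝ) k, ∫⁻ p, g p * ENNReal.ofReal (Real.exp (t * p.1 + k ⬝ᵥ p.2)) ≠ ∞)
    {σ : ℝ} (hσ : σ * σ = 1) (z : ℝ) (m c : Fin n → ℝ)
    (hB : ∀ k : Fin n → ℝ, ∫⁻ p in {p | 0 < σ * (p.1 - z)}, g p
      ≤ ∫⁻ p in {p | 0 < σ * (p.1 - z)}, g p *
          ENNReal.ofReal (Real.exp (k ⬝ᵥ (p.2 - c - (p.1 - z) • m)))) :
    (∫⁻ p in {p | 0 < σ * (p.1 + p.2 ⬝ᵥ m)},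
        f p * ENNReal.ofReal (Real.exp (z * p.1 + c ⬝ᵥ p.2)))
        * (∫⁻ p in {p | 0 < σ * (p.1 - z)}, g p)
      ≤ ENNReal.ofReal ((2 * Real.pi) ^ (n + 1) / 4) := by
  have md : ∀ k : Fin n → ℝ, Measurable fun p : ℝ × (Fin n → ℝ) => k ⬝ᵥ p.2 := fun k =>
    (measurable_dot k).comp measurable_snd
  have md' : ∀ k : Fin n → ℝ, Measurable fun p : ℝ × (Fin n → ℝ) => p.2 ⬝ᵥ k := fun k =>
    (measurable_dot' k).comp measurable_snd
  have hσ1 : ∀ t, σ * (σ * t) = t := fun t => by rw [← mul_assoc, hσ, one_mul]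
  set fe : ℝ × (Fin n → ℝ) → ℝ≥0∞ :=
    fun p => f p * ENNReal.ofReal (Real.exp (z * p.1 + c ⬝ᵥ p.2)) with hfe
  have mfe : Measurable fe := by
    have := md c
    fun_prop
  set f' : ℝ × (Fin n → ℝ) → ℝ≥0∞ := fun p => fe (σ * p.1 - p.2 ⬝ᵥ m, p.2) with hf'
  set g' : ℝ × (Fin n → ℝ) → ℝ≥0∞ := fun p => g (z + σ * p.1, c + p.2 + (σ * p.1) • m) with hg'
  have mf' : Measurable f' := by
    have := md' m
    fun_prop
  have mg' : Measurable g' := by fun_prop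
  have mE : MeasurableSet {p : ℝ × (Fin n → ℝ) | 0 < p.1} :=
    measurableSet_lt measurable_const measurable_fst
  have mA : MeasurableSet {p : ℝ × (Fin n → ℝ) | 0 < σ * (p.1 - z)} :=
    measurableSet_lt measurable_const (by fun_prop)
  have mAf : MeasurableSet {p : ℝ × (Fin n → ℝ) | 0 < σ * (p.1 + p.2 ⬝ᵥ m)} :=
    measurableSet_lt measurable_const (by have := md' m; fun_prop)
  have mk : ∀ k : Fin n → ℝ, Measurable fun p : ℝ × (Fin n → ℝ) =>
      k ⬝ᵥ (p.2 - c - (p.1 - z) • m) := fun k => (measurable_dot k).comp (by fun_prop)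
  -- change of variables for `g`
  have cg : ∀ k : Fin n → ℝ, ∫⁻ p in {p | 0 < p.1}, g' p * ENNReal.ofReal (Real.exp (k ⬝ᵥ p.2))
      = ∫⁻ p in {p | 0 < σ * (p.1 - z)}, g p *
          ENNReal.ofReal (Real.exp (k ⬝ᵥ (p.2 - c - (p.1 - z) • m))) := by
    intro k
    rw [← lintegral_indicator mE, ← lintegral_indicator mA, ← lintegral_shear' m c z hσ
      (Measurable.indicator (by have := mk k; fun_prop) mA)]
    refine lintegral_congr fun p => ?_
    have e1 : c + p.2 + (σ * p.1) • m - c - (z + σ * p.1 - z) • m = p.2 := by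
      rw [add_sub_cancel_left]; abel
    simp only [Set.indicator, Set.mem_ofPred_eq, add_sub_cancel_left, hσ1, hg']
    rw [show c + p.2 + (σ * p.1) • m - c - (σ * p.1) • m = p.2 by abel]
  have cg0 : ∫⁻ p in {p | 0 < p.1}, g' p = ∫⁻ p in {p | 0 < σ * (p.1 - z)}, g p := by
    simpa using cg 0
  have cf : ∫⁻ p in {p | 0 < p.1}, f' p = ∫⁻ p in {p | 0 < σ * (p.1 + p.2 ⬝ᵥ m)}, fe p := by
    rw [← lintegral_indicator mE, ← lintegral_indicator mAf, ← lintegral_shear m hσ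
      (mfe.indicator mAf)]
    refine lintegral_congr fun p => ?_
    simp only [Set.indicator, Set.mem_ofPred_eq, sub_add_cancel, hσ1, hf']
  rw [← cg0, ← cf]
  refine half_step IH mf' mg' ?_ ?_ ?_ ?_
  · intro r x s y
    simp only [hf', hg', hfe]
    calc _ = (f (σ * r - x ⬝ᵥ m, x) * g (z + σ * s, c + y + (σ * s) • m)) *
          ENNReal.ofReal (Real.exp (z * (σ * r - x ⬝ᵥ m) + c ⬝ᵥ x)) := by ring
      _ ≤ ENNReal.ofReal (Real.exp (-((σ * r - x ⬝ᵥ m) * (z + σ * s) +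
            x ⬝ᵥ (c + y + (σ * s) • m)))) *
          ENNReal.ofReal (Real.exp (z * (σ * r - x ⬝ᵥ m) + c ⬝ᵥ x)) := by
        gcongr; exact h _ _ _ _
      _ = _ := by
        rw [← ENNReal.ofReal_mul (Real.exp_nonneg _), ← Real.exp_add]
        congr 2
        simp only [dotProduct_add, dotProduct_smul, smul_eq_mul, dotProduct_comm c x]
        linear_combination (-(r * s)) * hσ
  · intro k
    have := ef z (c + k)
    rw [← lintegral_shear m hσ (by have := md (c + k); fun_prop)] at this
    refine (lintegral_congr fun p => ?_).trans_ne this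
    simp only [hf', hfe]
    rw [mul_assoc, ← ENNReal.ofReal_mul (Real.exp_nonneg _), ← Real.exp_add, add_dotProduct, add_assoc]
  · intro k
    -- `y = (p.2 - c) - (p.1 - z) m` costs a bounded factor and a tilt in the first coordinate
    have h1 : ∫⁻ p, g' p * ENNReal.ofReal (Real.exp (k ⬝ᵥ p.2))
        = ENNReal.ofReal (Real.exp (-(k ⬝ᵥ c) + z * (k ⬝ᵥ m))) *
          ∫⁻ p, g p * ENNReal.ofReal (Real.exp (-(k ⬝ᵥ m) * p.1 + k ⬝ᵥ p.2)) := by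
      rw [← lintegral_const_mul' _ _ (by simp), ← lintegral_shear' m c z hσ
        (F := fun p => ENNReal.ofReal (Real.exp (-(k ⬝ᵥ c) + z * (k ⬝ᵥ m))) *
          (g p * ENNReal.ofReal (Real.exp (-(k ⬝ᵥ m) * p.1 + k ⬝ᵥ p.2)))) (by
        have := md k; fun_prop)]
      refine lintegral_congr fun p => ?_
      rw [mul_left_comm, ← ENNReal.ofReal_mul (Real.exp_nonneg _), ← Real.exp_add]
      congr 3
      simp only [dotProduct_add, dotProduct_smul, smul_eq_mul]
      ring
    rw [h1]
    exact ENNReal.mul_ne_top (by simp) (eg _ _)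
  · intro k
    rw [cg k, cg0]
    exact hB k

lemma integrable_of_exp_moments {α : Type*} [MeasurableSpace α] {μ : Measure α} {l : α → ℝ}
    (hm : Measurable l) (h1 : ∫⁻ x, ENNReal.ofReal (Real.exp (l x)) ∂μ ≠ ∞)
    (h2 : ∫⁻ x, ENNReal.ofReal (Real.exp (-l x)) ∂μ ≠ ∞) : Integrable l μ := by
  refine ⟨hm.aestronglyMeasurable, lt_of_le_of_lt ?_ (ENNReal.add_lt_top.2
    ⟨lt_top_iff_ne_top.2 h1, lt_top_iff_ne_top.2 h2⟩)⟩
  rw [← lintegral_add_left (by fun_prop)]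
  refine lintegral_mono fun x => ?_
  rw [← ENNReal.ofReal_add (Real.exp_nonneg _) (Real.exp_nonneg _), ← ofReal_norm]
  refine ENNReal.ofReal_le_ofReal ?_
  rw [Real.norm_eq_abs]
  refine abs_le'.2 ⟨?_, ?_⟩
  · linarith [Real.add_one_le_exp (l x), Real.exp_nonneg (-l x)]
  · linarith [Real.add_one_le_exp (-l x), Real.exp_nonneg (l x)]

/-- The inductive step. The barycentres of the two halves of `g` lie on one line, which the shear makes
parallel to the first axis; summing `half_affine` over both halves, the tilt of `f` by the point
`(z, c)` of that line only increases its integral, as `f` is centred. -/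
lemma prod_step {n : ℕ} (IH : SantaloAt n) {f g : ℝ × (Fin n → ℝ) → ℝ≥0∞}
    (mf : Measurable f) (mg : Measurable g)
    (h : ∀ r x s y, f (r, x) * g (s, y) ≤ ENNReal.ofReal (Real.exp (-(r * s + x ⬝ᵥ y))))
    (hB : ∀ (t : ℝ) k, ∫⁻ p, f p ≤ ∫⁻ p, f p * ENNReal.ofReal (Real.exp (t * p.1 + k ⬝ᵥ p.2)))
    (ef : ∀ (t : ℝ) k, ∫⁻ p, f p * ENNReal.ofReal (Real.exp (t * p.1 + k ⬝ᵥ p.2)) ≠ ∞)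
    (eg : ∀ (t : ℝ) k, ∫⁻ p, g p * ENNReal.ofReal (Real.exp (t * p.1 + k ⬝ᵥ p.2)) ≠ ∞) :
    (∫⁻ p, f p) * (∫⁻ p, g p) ≤ ENNReal.ofReal ((2 * Real.pi) ^ (n + 1)) := by
  have md : ∀ k : Fin n → ℝ, Measurable fun p : ℝ × (Fin n → ℝ) => k ⬝ᵥ p.2 := fun k =>
    (measurable_dot k).comp measurable_snd
  have md' : ∀ k : Fin n → ℝ, Measurable fun p : ℝ × (Fin n → ℝ) => p.2 ⬝ᵥ k := fun k =>
    (measurable_dot' k).comp measurable_snd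
  rcases eq_or_ne (∫⁻ p, g p) 0 with h0 | h0
  · simp [h0]
  set μ : Measure (ℝ × (Fin n → ℝ)) := volume.withDensity g with hμ
  have fin : ∫⁻ p, g p ≠ ∞ := by simpa using eg 0 0
  have : IsFiniteMeasure μ := isFiniteMeasure_withDensity fin
  have null : ∀ z : ℝ, (volume : Measure (ℝ × (Fin n → ℝ))) {p | p.1 = z} = 0 := by
    intro z
    have : {p : ℝ × (Fin n → ℝ) | p.1 = z} = {z} ×ˢ Set.univ := by ext; simp
    rw [this, Measure.volume_eq_prod, Measure.prod_prod]; simp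
  have nullμ : ∀ z : ℝ, μ {p | p.1 = z} = 0 := fun z =>
    withDensity_absolutelyContinuous _ _ (null z)
  have im : ∀ (t : ℝ) k, ∫⁻ p, ENNReal.ofReal (Real.exp (t * p.1 + k ⬝ᵥ p.2)) ∂μ ≠ ∞ := by
    intro t k
    rw [hμ, lintegral_withDensity_eq_lintegral_mul _ mg (by have := md k; fun_prop)]
    exact eg t k
  have i1 : Integrable (fun p : ℝ × (Fin n → ℝ) => p.1) μ :=
    integrable_of_exp_moments measurable_fst (by simpa using im 1 0) (by simpa using im (-1) 0)
  have i2 : ∀ k : Fin n → ℝ, Integrable (fun p : ℝ × (Fin n → ℝ) => k ⬝ᵥ p.2) μ := fun k =>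
    integrable_of_exp_moments (md k) (by simpa using im 0 k) (by simpa using im 0 (-k))
  -- `z` bisects the mass of `g`
  have : NullSingletonClass (μ.map Prod.fst) := ⟨fun z => by
    rw [Measure.map_apply measurable_fst (measurableSet_singleton z)]
    exact nullμ z⟩
  obtain ⟨z, hz⟩ := exists_median (μ.map Prod.fst)
  rw [Measure.map_apply measurable_fst measurableSet_Ioi,
    Measure.map_apply measurable_fst measurableSet_Iio] at hz
  set A : Set (ℝ × (Fin n → ℝ)) := Prod.fst ⁻¹' Set.Ioi z with hA
  set B : Set (ℝ × (Fin n → ℝ)) := Prod.fst ⁻¹' Set.Iio z with hBdef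
  have mA : MeasurableSet A := measurable_fst measurableSet_Ioi
  have mB : MeasurableSet B := measurable_fst measurableSet_Iio
  have tot : ∫⁻ p, g p = 2 * μ A := by
    have e : μ Set.univ = μ A + μ B := by
      rw [← measure_union _ mB]
      · refine (measure_mono_null (t := {p | p.1 = z}) ?_ (nullμ z) |> fun h =>
          (measure_eq_measure_of_null_sdiff (Set.subset_univ (A ∪ B)) h).symm)
        intro p hp
        simp only [hA, hBdef, Set.mem_sdiff, Set.mem_univ, true_and, Set.mem_union,
          Set.mem_preimage, Set.mem_Ioi, Set.mem_Iio, not_or, not_lt] at hp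
        exact le_antisymm hp.1 hp.2
      · rw [Set.disjoint_left]
        intro p hp hp'
        exact lt_asymm (show z < p.1 from hp) hp'
    rw [← hz, ← two_mul] at e
    rw [← e, hμ, withDensity_apply _ MeasurableSet.univ, Measure.restrict_univ]
  have hA0 : μ A ≠ 0 := fun h => h0 (by rw [tot, h, mul_zero])
  set q : ℝ := μ.real A with hq
  have q0 : 0 < q := ENNReal.toReal_pos hA0 (measure_ne_top _ _)
  have qB : μ.real B = q := by rw [hq, measureReal_def, ← hz]; rfl
  have i1z : Integrable (fun p : ℝ × (Fin n → ℝ) => p.1 - z) μ := i1.sub (integrable_const z)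
  set a : ℝ := ∫ p in A, (p.1 - z) ∂μ with ha
  set b : ℝ := ∫ p in B, (p.1 - z) ∂μ with hb
  have a0 : 0 < a := by
    rw [ha, setIntegral_pos_iff_support_of_nonneg_ae]
    · refine lt_of_lt_of_le (pos_iff_ne_zero.2 hA0) (measure_mono fun p hp => ⟨?_, hp⟩)
      exact (sub_pos.2 (show z < p.1 from hp)).ne'
    · exact (ae_restrict_iff' mA).2 (.of_forall fun p hp => (sub_pos.2 (show z < p.1 from hp)).le)
    · exact i1z.integrableOn
  have b0 : b ≤ 0 := setIntegral_nonpos mB fun p hp => (sub_neg.2 (show p.1 < z from hp)).le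
  -- the shear `m` and the shift `c` centre both halves of `g` in the last `n` coordinates
  set P : Fin n → ℝ := fun i => ∫ p in A, p.2 i ∂μ with hP
  set Q : Fin n → ℝ := fun i => ∫ p in B, p.2 i ∂μ with hQ
  set m : Fin n → ℝ := (a - b)⁻¹ • (P - Q) with hm
  set c : Fin n → ℝ := q⁻¹ • (P - a • m) with hc
  have hPe : P = q • c + a • m := by
    rw [hc, smul_inv_smul₀ q0.ne']; abel
  have hQe : Q = q • c + b • m := by
    have : (a - b) • m = P - Q := by rw [hm, smul_inv_smul₀]; linarith
    rw [sub_smul] at this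
    have h3 : P = q • c + a • m := hPe
    have : Q = P - (a • m - b • m) := by rw [this]; abel
    rw [this, h3]; abel
  have ji : ∀ k : Fin n → ℝ, Integrable (fun p : ℝ × (Fin n → ℝ) =>
      k ⬝ᵥ (p.2 - c - (p.1 - z) • m)) μ := by
    intro k
    have : (fun p : ℝ × (Fin n → ℝ) => k ⬝ᵥ (p.2 - c - (p.1 - z) • m))
        = fun p => k ⬝ᵥ p.2 - k ⬝ᵥ c - (p.1 - z) * (k ⬝ᵥ m) := by
      funext p; simp only [dotProduct_sub, dotProduct_smul, smul_eq_mul]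
    rw [this]
    exact ((i2 k).sub (integrable_const _)).sub (i1z.mul_const _)
  have comp : ∀ i, Integrable (fun p : ℝ × (Fin n → ℝ) => p.2 i) μ := fun i => by
    simpa using i2 (Pi.single i 1)
  have jz : ∀ (S : Set (ℝ × (Fin n → ℝ))) (d : ℝ) (V : Fin n → ℝ),
      (∀ i, V i = ∫ p in S, p.2 i ∂μ) → μ.real S = q → d = ∫ p in S, (p.1 - z) ∂μ →
      V = q • c + d • m → ∀ k : Fin n → ℝ,
      ∫ p in S, k ⬝ᵥ (p.2 - c - (p.1 - z) • m) ∂μ = 0 := by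
    intro S d V hV hS hd hVe k
    have e1 : (fun p : ℝ × (Fin n → ℝ) => k ⬝ᵥ (p.2 - c - (p.1 - z) • m))
        = fun p => k ⬝ᵥ p.2 - k ⬝ᵥ c - (p.1 - z) * (k ⬝ᵥ m) := by
      funext p; simp only [dotProduct_sub, dotProduct_smul, smul_eq_mul]
    have e2 : ∫ p in S, k ⬝ᵥ p.2 ∂μ = k ⬝ᵥ V := by
      simp only [dotProduct, hV]
      rw [integral_finsetSum _ fun i _ => ((comp i).const_mul _).integrableOn]
      simp only [integral_const_mul]
    have j1 : Integrable (fun p : ℝ × (Fin n → ℝ) => k ⬝ᵥ p.2 - k ⬝ᵥ c) (μ.restrict S) :=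
      ((i2 k).sub (integrable_const _)).integrableOn
    rw [e1, integral_sub j1 (i1z.mul_const _).integrableOn, integral_sub (i2 k).integrableOn (integrable_const _),
      e2, integral_mul_const, ← hd, hVe]
    simp [dotProduct_add, dotProduct_smul, hS]
  have jen : ∀ (S : Set (ℝ × (Fin n → ℝ))), MeasurableSet S →
      (∀ k : Fin n → ℝ, ∫ p in S, k ⬝ᵥ (p.2 - c - (p.1 - z) • m) ∂μ = 0) → ∀ k : Fin n → ℝ,
      ∫⁻ p in S, g p ≤ ∫⁻ p in S, g p *
          ENNReal.ofReal (Real.exp (k ⬝ᵥ (p.2 - c - (p.1 - z) • m))) := by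
    intro S mS hS k
    have := jensen_exp (ji k).integrableOn (hS k)
    rw [Measure.restrict_apply_univ, hμ, withDensity_apply _ mS, restrict_withDensity mS,
      lintegral_withDensity_eq_lintegral_mul _ mg] at this
    · exact this
    · have : Measurable fun p : ℝ × (Fin n → ℝ) => k ⬝ᵥ (p.2 - c - (p.1 - z) • m) :=
        (measurable_dot k).comp (by fun_prop)
      fun_prop
  have sA : {p : ℝ × (Fin n → ℝ) | 0 < (1 : ℝ) * (p.1 - z)} = A := by
    ext p; simp [hA]
  have sB : {p : ℝ × (Fin n → ℝ) | 0 < (-1 : ℝ) * (p.1 - z)} = B := by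
    ext p; simp [hBdef]
  have H1 := half_affine IH mf mg h ef eg (σ := 1) (by norm_num) z m c (by
    rw [sA]; exact jen A mA (jz A a P (fun i => rfl) rfl ha hPe))
  have H2 := half_affine IH mf mg h ef eg (σ := -1) (by norm_num) z m c (by
    rw [sB]; exact jen B mB (jz B b Q (fun i => rfl) qB hb hQe))
  rw [sA] at H1
  rw [sB] at H2
  have gA : ∫⁻ p in A, g p = μ A := (withDensity_apply _ mA).symm
  have gB : ∫⁻ p in B, g p = μ A := by rw [hz]; exact (withDensity_apply _ mB).symm
  rw [gA] at H1
  rw [gB] at H2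
  set fe : ℝ × (Fin n → ℝ) → ℝ≥0∞ :=
    fun p => f p * ENNReal.ofReal (Real.exp (z * p.1 + c ⬝ᵥ p.2)) with hfe
  have mfe : Measurable fe := by
    have := md c
    fun_prop
  have m1 : MeasurableSet {p : ℝ × (Fin n → ℝ) | 0 < (1 : ℝ) * (p.1 + p.2 ⬝ᵥ m)} :=
    measurableSet_lt measurable_const (by have := md' m; fun_prop)
  have m2 : MeasurableSet {p : ℝ × (Fin n → ℝ) | 0 < (-1 : ℝ) * (p.1 + p.2 ⬝ᵥ m)} :=
    measurableSet_lt measurable_const (by have := md' m; fun_prop)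
  have split : ∫⁻ p, fe p ≤ (∫⁻ p in {p | 0 < (1 : ℝ) * (p.1 + p.2 ⬝ᵥ m)}, fe p) +
      ∫⁻ p in {p | 0 < (-1 : ℝ) * (p.1 + p.2 ⬝ᵥ m)}, fe p := by
    rw [← lintegral_indicator m1, ← lintegral_indicator m2,
      ← lintegral_add_left (mfe.indicator m1),
      ← lintegral_shear m (σ := 1) (by norm_num) mfe, ← lintegral_shear m (σ := 1) (by norm_num)
        (F := fun p => {p | 0 < (1 : ℝ) * (p.1 + p.2 ⬝ᵥ m)}.indicator fe p +
          {p | 0 < (-1 : ℝ) * (p.1 + p.2 ⬝ᵥ m)}.indicator fe p) ((mfe.indicator m1).add (mfe.indicator m2))]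
    refine lintegral_mono_ae ?_
    have : ∀ᵐ p : ℝ × (Fin n → ℝ), p.1 ≠ 0 := by
      rw [ae_iff]; simpa using null 0
    filter_upwards [this] with p hp
    rcases lt_or_gt_of_ne hp with hp | hp
    · simp only [Set.indicator, Set.mem_ofPred_eq, sub_add_cancel, one_mul, neg_mul,
        Left.neg_pos_iff, hp, if_true]
      exact le_add_self
    · simp only [Set.indicator, Set.mem_ofPred_eq, sub_add_cancel, one_mul, hp, if_true]
      exact le_self_add
  calc (∫⁻ p, f p) * (∫⁻ p, g p) ≤ (∫⁻ p, fe p) * (2 * μ A) := by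
        rw [tot]; exact mul_le_mul' (hB z c) le_rfl
    _ ≤ ((∫⁻ p in {p | 0 < (1 : ℝ) * (p.1 + p.2 ⬝ᵥ m)}, fe p) +
      ∫⁻ p in {p | 0 < (-1 : ℝ) * (p.1 + p.2 ⬝ᵥ m)}, fe p) * (2 * μ A) := by gcongr
    _ = 2 * ((∫⁻ p in {p | 0 < (1 : ℝ) * (p.1 + p.2 ⬝ᵥ m)}, fe p) * μ A +
      (∫⁻ p in {p | 0 < (-1 : ℝ) * (p.1 + p.2 ⬝ᵥ m)}, fe p) * μ A) := by ring
    _ ≤ 2 * (ENNReal.ofReal ((2 * Real.pi) ^ (n + 1) / 4) +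
        ENNReal.ofReal ((2 * Real.pi) ^ (n + 1) / 4)) := by gcongr
    _ = _ := by
      rw [← ENNReal.ofReal_add (by positivity) (by positivity),
        show (2 : ℝ≥0∞) = ENNReal.ofReal 2 by simp, ← ENNReal.ofReal_mul (by norm_num)]
      congr 1; ring

/-! ### Santaló inequality for Gaussian integrals -/

lemma santaloAt : ∀ n, SantaloAt n
  | 0 => by
    intro f g _ _ h _ _ _
    have := h 0 0
    simp only [zero_dotProduct, neg_zero, Real.exp_zero] at this
    simpa [Measure.volume_pi_eq_dirac (0 : Fin 0 → ℝ)] using this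
  | n + 1 => by
    intro f g mf mg h hB ef eg
    have hv := (volume_preserving_piFinSuccAbove (fun _ : Fin (n + 1) => ℝ) 0).symm
    set e := (MeasurableEquiv.piFinSuccAbove (fun _ : Fin (n + 1) => ℝ) 0).symm with he
    have tr : ∀ u : (Fin (n + 1) → ℝ) → ℝ≥0∞, ∫⁻ x, u x = ∫⁻ p, u (e p) := fun u =>
      (hv.lintegral_comp_emb e.measurableEmbedding u).symm
    have dot : ∀ (p q : ℝ × (Fin n → ℝ)), e p ⬝ᵥ e q = p.1 * q.1 + p.2 ⬝ᵥ q.2 := by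
      intro p q
      simp only [dotProduct, Fin.sum_univ_succ]
      rfl
    have dot' : ∀ (t : ℝ) (k : Fin n → ℝ) (p : ℝ × (Fin n → ℝ)),
        t * p.1 + k ⬝ᵥ p.2 = e (t, k) ⬝ᵥ e p := fun t k p => (dot (t, k) p).symm
    rw [tr f, tr g]
    refine prod_step (santaloAt n) (mf.comp e.measurable) (mg.comp e.measurable) ?_ ?_ ?_ ?_
    · intro r x s y
      rw [show r * s + x ⬝ᵥ y = e (r, x) ⬝ᵥ e (s, y) from (dot (r, x) (s, y)).symm]
      exact h _ _
    · intro t k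
      simp only [dot']
      exact (tr f).symm.le.trans ((hB (e (t, k))).trans (tr _).le)
    · intro t k
      simp only [dot']
      exact (tr _).symm.trans_ne (ef (e (t, k)))
    · intro t k
      simp only [dot']
      exact (tr _).symm.trans_ne (eg (e (t, k)))

lemma gaussian_moment {n : ℕ} {p : Euc n → ℝ} {κ : ℝ} (κ0 : 0 < κ)
    (hκ : ∀ x, κ * ‖x‖ ≤ p x) (c : Euc n) :
    ∫⁻ x, ENNReal.ofReal (Real.exp (-(p x) ^ 2)) * ENNReal.ofReal (Real.exp ⟪c, x⟫) ≠ ∞ := by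
  have hi := GaussianFourier.integrable_cexp_neg_mul_sq_norm_add (V := Euc n)
    (b := ((κ ^ 2 : ℝ) : ℂ)) (by rw [Complex.ofReal_re]; positivity) 1 c
  refine ne_top_of_le_ne_top (ne_of_lt hi.2) (lintegral_mono fun x => ?_)
  rw [← ENNReal.ofReal_mul (Real.exp_nonneg _), ← ofReal_norm, Complex.norm_exp, ← Real.exp_add]
  refine ENNReal.ofReal_le_ofReal (Real.exp_le_exp.2 ?_)
  have : (κ * ‖x‖) ^ 2 ≤ p x ^ 2 := by gcongr; exact hκ x
  have e : (-((κ ^ 2 : ℝ) : ℂ) * (‖x‖ : ℂ) ^ 2 + 1 * (⟪c, x⟫ : ℝ)).re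
      = -(κ * ‖x‖) ^ 2 + ⟪c, x⟫ := by
    rw [show (-((κ ^ 2 : ℝ) : ℂ) * (‖x‖ : ℂ) ^ 2 + 1 * (⟪c, x⟫ : ℝ))
      = ((-(κ * ‖x‖) ^ 2 + ⟪c, x⟫ : ℝ) : ℂ) by push_cast; ring, Complex.ofReal_re]
  rw [e]; linarith

/-- Even functions are centred, because `cosh ≥ 1`. -/
lemma even_tilt {n : ℕ} {f : Euc n → ℝ≥0∞} (mf : Measurable f) (he : ∀ x, f (-x) = f x)
    (c : Euc n) : ∫⁻ x, f x ≤ ∫⁻ x, f x * ENNReal.ofReal (Real.exp ⟪c, x⟫) := by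
  have h2 : ∫⁻ x, f x * ENNReal.ofReal (Real.exp (-⟪c, x⟫))
      = ∫⁻ x, f x * ENNReal.ofReal (Real.exp ⟪c, x⟫) := by
    rw [← lintegral_neg_eq_self]
    simp [he]
  have h3 : 2 * ∫⁻ x, f x ≤ 2 * ∫⁻ x, f x * ENNReal.ofReal (Real.exp ⟪c, x⟫) := by
    rw [two_mul (∫⁻ x, f x * _)]
    nth_rw 2 [← h2]
    rw [← lintegral_add_left (by fun_prop), ← lintegral_const_mul _ mf]
    refine lintegral_mono fun x => ?_
    rw [← mul_add, mul_comm, ← ENNReal.ofReal_add (Real.exp_nonneg _) (Real.exp_nonneg _)]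
    gcongr
    refine (show (2 : ℝ≥0∞) ≤ ENNReal.ofReal 2 by simp).trans (ENNReal.ofReal_le_ofReal ?_)
    linarith [Real.add_one_le_exp ⟪c, x⟫, Real.add_one_le_exp (-⟪c, x⟫)]
  exact (ENNReal.mul_le_mul_iff_right (by simp) (by simp)).1 h3

/-- Santaló's inequality for the Gaussian integrals of two dual norms. Since `2 p q ≤ p² + q²`, the
functional inequality applies to `exp (-p²)` and to `exp (-q²)` rescaled by `1/2`. -/
theorem santalo {n : ℕ} {p q : Euc n → ℝ} (cp : Continuous p) (cq : Continuous q)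
    (he : ∀ x, p (-x) = p x) (h : ∀ x y, ⟪x, y⟫ ≤ p x * q y) {κ : ℝ} (κ0 : 0 < κ)
    (hp : ∀ x, κ * ‖x‖ ≤ p x) (hq : ∀ x, κ * ‖x‖ ≤ q x) :
    (∫⁻ x, ENNReal.ofReal (Real.exp (-(p x) ^ 2))) * ∫⁻ x, ENNReal.ofReal (Real.exp (-(q x) ^ 2))
      ≤ ENNReal.ofReal (Real.pi ^ n) := by
  set f : Euc n → ℝ≥0∞ := fun x => ENNReal.ofReal (Real.exp (-(p x) ^ 2)) with hf
  set g : Euc n → ℝ≥0∞ := fun x => ENNReal.ofReal (Real.exp (-(q ((2:ℝ)⁻¹ • x)) ^ 2)) with hg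
  have mf : Measurable f := by fun_prop
  have mg : Measurable g := by fun_prop
  have hv := PiLp.volume_preserving_toLp (Fin n)
  have tr : ∀ u : Euc n → ℝ≥0∞, ∫⁻ x, u (WithLp.toLp 2 x) = ∫⁻ x, u x := fun u =>
    hv.lintegral_comp_emb (MeasurableEquiv.toLp 2 (Fin n → ℝ)).measurableEmbedding u
  have dot : ∀ x y : Fin n → ℝ, x ⬝ᵥ y = ⟪(WithLp.toLp 2 x : Euc n), WithLp.toLp 2 y⟫ := by
    intro x y
    rw [EuclideanSpace.inner_toLp_toLp, dotProduct_comm]; rfl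
  have main := santaloAt n (fun x => f (WithLp.toLp 2 x)) (fun x => g (WithLp.toLp 2 x))
    (mf.comp hv.measurable) (mg.comp hv.measurable) ?_ ?_ ?_ ?_
  · rw [tr f, tr g] at main
    have sc : ∫⁻ x, g x = ENNReal.ofReal (2 ^ n) *
        ∫⁻ x, ENNReal.ofReal (Real.exp (-(q x) ^ 2)) := by
      have := lintegral_map_equiv (μ := (volume : Measure (Euc n)))
        (fun x => ENNReal.ofReal (Real.exp (-(q x) ^ 2)))
        (Homeomorph.smulOfNeZero (2:ℝ)⁻¹ (by norm_num)).toMeasurableEquiv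
      change ∫⁻ x, _ ∂ Measure.map ((2:ℝ)⁻¹ • ·) volume = ∫⁻ x, g x at this
      rw [← this, Measure.map_addHaar_smul _ (by norm_num), lintegral_smul_measure]
      simp
    rw [sc, mul_left_comm] at main
    rw [← ENNReal.mul_le_mul_iff_right (a := ENNReal.ofReal (2 ^ n)) (by simp) (by simp)]
    refine main.trans_eq ?_
    rw [← ENNReal.ofReal_mul (by positivity), mul_pow]
  · intro x y
    rw [dot, hf, hg, ← ENNReal.ofReal_mul (Real.exp_nonneg _), ← Real.exp_add]
    refine ENNReal.ofReal_le_ofReal (Real.exp_le_exp.2 ?_)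
    have := h (WithLp.toLp 2 x) ((2:ℝ)⁻¹ • WithLp.toLp 2 y)
    rw [inner_smul_right] at this
    nlinarith [sq_nonneg (p (WithLp.toLp 2 x) - q ((2:ℝ)⁻¹ • WithLp.toLp 2 y))]
  · intro c
    simp only [dot]
    rw [tr f, tr fun x => f x * ENNReal.ofReal (Real.exp ⟪WithLp.toLp 2 c, x⟫)]
    exact even_tilt mf (fun x => by simp [hf, he]) _
  · intro c
    simp only [dot]
    rw [tr fun x => f x * ENNReal.ofReal (Real.exp ⟪WithLp.toLp 2 c, x⟫)]
    exact gaussian_moment κ0 hp _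
  · intro c
    simp only [dot]
    rw [tr fun x => g x * ENNReal.ofReal (Real.exp ⟪WithLp.toLp 2 c, x⟫)]
    refine gaussian_moment (p := fun x => q ((2:ℝ)⁻¹ • x)) (half_pos κ0) (fun x => ?_) _
    have := hq ((2:ℝ)⁻¹ • x)
    rw [norm_smul] at this
    norm_num at this
    linarith

/-! ### Duality maps and hyperbolic dilations -/

/-- `G` has the properties needed of the gradient of `x ↦ ‖x‖²/2` for a smooth, uniformly convex norm
with `‖x‖² = ⟨G x, x⟩`. The field `cs` combines `⟨G x, z⟩ ≤ ‖x‖ ‖z‖` with the arithmetic-geometric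
mean inequality, `mono` is strong monotonicity, and one constant `Λ` serves for both Euclidean
comparisons. Differentiability is required away from the origin only. -/
structure DualityMap {n : ℕ} (G : Euc n → Euc n) (Λ : ℝ) : Prop where
  cont : Continuous G
  hom : ∀ (t : ℝ) x, G (t • x) = t • G x
  cs : ∀ x z, 2 * ⟪G x, z⟫ ≤ ⟪G x, x⟫ + ⟪G z, z⟫
  pos : 0 < Λ
  mono : ∀ x z, ‖x - z‖ ^ 2 ≤ Λ * ⟪G x - G z, x - z⟫
  bound : ∀ x, ‖G x‖ ^ 2 ≤ Λ * ⟪G x, x⟫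
  diff : ∀ x, x ≠ 0 → DifferentiableAt ℝ G x

namespace DualityMap
variable {n : ℕ} {G : Euc n → Euc n} {Λ : ℝ}

lemma zero (h : DualityMap G Λ) : G 0 = 0 := by simpa using h.hom 0 0

lemma neg (h : DualityMap G Λ) (x : Euc n) : G (-x) = -G x := by simpa using h.hom (-1) x

lemma norm_le (h : DualityMap G Λ) (x : Euc n) : ‖x‖ ^ 2 ≤ Λ * ⟪G x, x⟫ := by
  simpa [h.zero] using h.mono x 0

lemma nonneg (h : DualityMap G Λ) (x : Euc n) : 0 ≤ ⟪G x, x⟫ := by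
  have := h.norm_le x
  by_contra hc
  nlinarith [h.pos, sq_nonneg ‖x‖]

/-- The bijection `(x, x') ↦ (x + x', G x - G x')` of `ℝⁿ × ℝⁿ`. -/
def S (G : Euc n → Euc n) (p : Euc n × Euc n) : Euc n × Euc n := (p.1 + p.2, G p.1 - G p.2)

/-- The sum `‖x‖² + ‖x'‖²` of the squared norms attached to `G`. -/
def P (G : Euc n → Euc n) (p : Euc n × Euc n) : ℝ := ⟪G p.1, p.1⟫ + ⟪G p.2, p.2⟫

lemma continuous_S (h : DualityMap G Λ) : Continuous (S G) := by
  have := h.cont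
  unfold S; fun_prop

lemma continuous_P (h : DualityMap G Λ) : Continuous (P G) := by
  have := h.cont
  unfold P; fun_prop

lemma P_nonneg (h : DualityMap G Λ) (p : Euc n × Euc n) : 0 ≤ P G p :=
  add_nonneg (h.nonneg _) (h.nonneg _)

/-- Strong monotonicity of `G` shows that `x + x'` and `G x - G x'` determine both points. -/
lemma S_injective (h : DualityMap G Λ) : Function.Injective (S G) := by
  rintro ⟨x, x'⟩ ⟨z, z'⟩ he
  simp only [S, Prod.mk.injEq] at he
  obtain ⟨h1, h2⟩ := he
  have e1 : x' - z' = -(x - z) := by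
    rw [← sub_eq_zero] at h1 ⊢; rw [← h1]; abel
  have e2 : G x' - G z' = G x - G z := by
    rw [← sub_eq_zero] at h2 ⊢; rw [← neg_eq_zero, ← h2]; abel
  have m1 := h.mono x z
  have m2 := h.mono x' z'
  rw [e1, e2, inner_neg_right, norm_neg] at m2
  have : ‖x - z‖ ^ 2 ≤ 0 := by linarith
  have : x - z = 0 := by
    rw [← norm_eq_zero]; exact pow_eq_zero_iff (two_ne_zero) |>.1 (le_antisymm this (sq_nonneg _))
  rw [this, neg_zero] at e1
  rw [sub_eq_zero.1 this, sub_eq_zero.1 e1]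

/-- A preimage of `(a, b)` is `(x, a - x)`, where `x` minimises `φ x + φ (a - x) - ⟨b, x⟩` for
`φ x = ⟨G x, x⟩ / 2`. -/
lemma S_surjective (h : DualityMap G Λ) : Function.Surjective (S G) := by
  rintro ⟨a, b⟩
  set φ : Euc n → ℝ := fun x => ⟪G x, x⟫ / 2 with hφ
  have cφ : Continuous φ := by have := h.cont; fun_prop
  have grad : ∀ x z, φ z - φ x ≤ ⟪G z, z - x⟫ := by
    intro x z
    have := h.cs z x
    simp only [hφ, inner_sub_right]
    linarith
  set ψ : Euc n → ℝ := fun x => φ x + φ (a - x) - ⟪b, x⟫ with hψ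
  have cψ : Continuous ψ := by fun_prop
  have coer : Filter.Tendsto ψ (Filter.cocompact _) Filter.atTop := by
    have t1 : Filter.Tendsto (fun x : Euc n => ‖x‖ * (‖x‖ / (2 * Λ) - ‖b‖)) (Filter.cocompact _)
        Filter.atTop := by
      have := tendsto_norm_cocompact_atTop (E := Euc n)
      refine this.atTop_mul_atTop₀ ?_
      exact Filter.tendsto_atTop_add_const_right _ _
        (this.atTop_div_const (by have := h.pos; positivity))
    refine Filter.tendsto_atTop_mono (fun x => ?_) t1
    have h1 := h.norm_le x
    have h2 := h.nonneg (a - x)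
    have h3 := real_inner_le_norm b x
    have h4 : ‖x‖ ^ 2 / Λ ≤ ⟪G x, x⟫ := by rw [div_le_iff₀ h.pos]; linarith
    have h5 : ‖x‖ * (‖x‖ / (2 * Λ) - ‖b‖) = ‖x‖ ^ 2 / Λ / 2 - ‖b‖ * ‖x‖ := by ring
    simp only [hψ, hφ]
    rw [h5]; linarith
  obtain ⟨x, hx⟩ := cψ.exists_forall_le coer
  -- the first-order condition at the minimiser; `φ` need not be differentiated, since `grad` bounds
  -- its increments and `G` is continuous
  have key : ∀ v, 0 ≤ ⟪G x - G (a - x) - b, v⟫ := by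
    intro v
    set H : ℝ → ℝ := fun t => ⟪G (x + t • v) - G (a - (x + t • v)) - b, v⟫ with hH
    have cH : Continuous H := by have := h.cont; fun_prop
    have hpos : ∀ t, 0 < t → 0 ≤ H t := by
      intro t ht
      have h1 := hx (x + t • v)
      have h2 := grad x (x + t • v)
      have h3 := grad (a - x) (a - (x + t • v))
      rw [add_sub_cancel_left, inner_smul_right] at h2
      rw [show a - (x + t • v) - (a - x) = -(t • v) by abel, inner_neg_right,
        inner_smul_right] at h3
      simp only [hψ, inner_add_right, inner_smul_right] at h1
      have : 0 ≤ t * H t := by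
        simp only [hH, inner_sub_left]
        nlinarith
      exact nonneg_of_mul_nonneg_right this ht
    have lim : Filter.Tendsto H (nhdsWithin 0 (Set.Ioi 0)) (nhds (H 0)) :=
      cH.continuousWithinAt
    have := ge_of_tendsto lim (Filter.eventually_of_mem self_mem_nhdsWithin hpos)
    simpa [hH] using this
  have k0 : G x - G (a - x) - b = 0 := by
    have := key (-(G x - G (a - x) - b))
    rw [inner_neg_right, real_inner_self_eq_norm_sq] at this
    rw [← norm_eq_zero]
    exact pow_eq_zero_iff (two_ne_zero) |>.1 (le_antisymm (by linarith) (sq_nonneg _))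
  refine ⟨(x, a - x), ?_⟩
  simp only [S, add_sub_cancel, Prod.mk.injEq, true_and]
  exact sub_eq_zero.1 k0

/-- `P ≤ Λ (|a|² + |b|²)` where `(a, b) = S (x, x')`. -/
lemma P_le (h : DualityMap G Λ) (p : Euc n × Euc n) :
    P G p ≤ Λ * (‖(S G p).1‖ ^ 2 + ‖(S G p).2‖ ^ 2) := by
  have e : P G p = ⟪(S G p).1, G p.2⟫ + ⟪(S G p).2, p.1⟫ := by
    simp only [P, S, inner_add_left, inner_sub_left]
    rw [real_inner_comm p.1 (G p.2), real_inner_comm p.2 (G p.2)]; ring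
  have h1 := real_inner_le_norm (S G p).1 (G p.2)
  have h2 := real_inner_le_norm (S G p).2 p.1
  have h3 := h.norm_le p.1
  have h4 := h.bound p.2
  have h0 := h.pos
  set u := ‖(S G p).1‖
  set v := ‖(S G p).2‖
  set c := ‖G p.2‖
  set d := ‖p.1‖
  have a1 : 2 * Λ * (u * c) ≤ Λ ^ 2 * u ^ 2 + c ^ 2 := by nlinarith [sq_nonneg (Λ * u - c)]
  have a2 : 2 * Λ * (v * d) ≤ Λ ^ 2 * v ^ 2 + d ^ 2 := by nlinarith [sq_nonneg (Λ * v - d)]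
  have a3 : c ^ 2 + d ^ 2 ≤ Λ * P G p := by simp only [P]; linarith
  have a4 : 2 * Λ * P G p ≤ Λ ^ 2 * (u ^ 2 + v ^ 2) + Λ * P G p := by
    have : 2 * Λ * P G p ≤ 2 * Λ * (u * c + v * d) := by
      rw [e]; gcongr
    linarith
  have a5 : Λ * P G p ≤ Λ * (Λ * (u ^ 2 + v ^ 2)) := by linarith
  exact le_of_mul_le_mul_left a5 h0

/-- The Euclidean size `|x|² + |G x|²` of a point of the graph of `G`. -/
def A (G : Euc n → Euc n) (x : Euc n) : ℝ := ‖x‖ ^ 2 + ‖G x‖ ^ 2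

lemma A_le (h : DualityMap G Λ) (x : Euc n) : A G x ≤ 2 * Λ * ⟪G x, x⟫ := by
  have := h.norm_le x; have := h.bound x; simp only [A]; linarith

/-- The cross term in `|x + x'|² + |G x - G x'|²`. -/
def R (G : Euc n → Euc n) (p : Euc n × Euc n) : ℝ := 2 * (⟪p.1, p.2⟫ - ⟪G p.1, G p.2⟫)

lemma sq_S (p : Euc n × Euc n) :
    ‖(S G p).1‖ ^ 2 + ‖(S G p).2‖ ^ 2 = A G p.1 + A G p.2 + R G p := by
  simp only [S, A, R, norm_add_sq_real, norm_sub_sq_real]; ring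

lemma abs_R_le (p : Euc n × Euc n) : |R G p| ≤ A G p.1 + A G p.2 := by
  have h1 := abs_real_inner_le_norm p.1 p.2
  have h2 := abs_real_inner_le_norm (G p.1) (G p.2)
  simp only [R, A]
  rw [abs_mul, abs_two]
  have := abs_sub ⟪p.1, p.2⟫ ⟪G p.1, G p.2⟫
  nlinarith [sq_nonneg (‖p.1‖ - ‖p.2‖), sq_nonneg (‖G p.1‖ - ‖G p.2‖)]

lemma sq_S_le (h : DualityMap G Λ) (p : Euc n × Euc n) :
    ‖(S G p).1‖ ^ 2 + ‖(S G p).2‖ ^ 2 ≤ 4 * Λ * P G p := by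
  rw [sq_S]
  have := (abs_le.1 (abs_R_le (G := G) p)).2
  have := h.A_le p.1; have := h.A_le p.2
  simp only [P]; linarith

/-- The derivative of `S` at points of `dom`. -/
def dS (G : Euc n → Euc n) (p : Euc n × Euc n) : Euc n × Euc n →L[ℝ] Euc n × Euc n :=
  (ContinuousLinearMap.fst ℝ (Euc n) (Euc n) + ContinuousLinearMap.snd ℝ (Euc n) (Euc n)).prod
    ((fderiv ℝ G p.1).comp (ContinuousLinearMap.fst ℝ (Euc n) (Euc n)) -
      (fderiv ℝ G p.2).comp (ContinuousLinearMap.snd ℝ (Euc n) (Euc n)))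

/-- Pairs with both components nonzero, where `S` is differentiable. -/
def dom (n : ℕ) : Set (Euc n × Euc n) := {p | p.1 ≠ 0 ∧ p.2 ≠ 0}

lemma measurableSet_dom : MeasurableSet (dom n) :=
  (measurable_fst (measurableSet_singleton (0 : Euc n)).compl).inter
    (measurable_snd (measurableSet_singleton (0 : Euc n)).compl)

lemma hasFDerivAt_S (h : DualityMap G Λ) {p : Euc n × Euc n} (hp : p ∈ dom n) :
    HasFDerivAt (S G) (dS G p) p :=
  (hasFDerivAt_fst.add hasFDerivAt_snd).prodMk
    (((h.diff _ hp.1).hasFDerivAt.comp p hasFDerivAt_fst).sub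
      ((h.diff _ hp.2).hasFDerivAt.comp p hasFDerivAt_snd))

/-- The pull-back of Lebesgue measure under `S`, through its Jacobian. -/
def nu (G : Euc n → Euc n) : Measure (Euc n × Euc n) :=
  (volume.restrict (dom n)).withDensity fun p => ENNReal.ofReal |(dS G p).det|

/-- The derivative of `G` is homogeneous of degree `0`. -/
lemma fderiv_hom (h : DualityMap G Λ) {t : ℝ} (ht : t ≠ 0) {x : Euc n} (hx : x ≠ 0) :
    fderiv ℝ G (t • x) = fderiv ℝ G x := by
  refine HasFDerivAt.fderiv ?_
  have h1 : HasFDerivAt (fun y : Euc n => t⁻¹ • y) (t⁻¹ • ContinuousLinearMap.id ℝ (Euc n)) (t • x) :=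
    (hasFDerivAt_id (t • x)).const_smul t⁻¹
  have h2 : HasFDerivAt G (fderiv ℝ G x) (t⁻¹ • t • x) := by
    rw [inv_smul_smul₀ ht]; exact (h.diff x hx).hasFDerivAt
  have h3 := (h2.comp (t • x) h1).const_smul t
  have e : (t • (G ∘ fun y : Euc n => t⁻¹ • y)) = G := by
    funext y; simp [h.hom, smul_inv_smul₀ ht]
  rw [e] at h3
  have e2 : t • (fderiv ℝ G x ∘SL (t⁻¹ • ContinuousLinearMap.id ℝ (Euc n))) = fderiv ℝ G x := by
    ext v; simp [smul_smul, mul_inv_cancel₀ ht]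
  exact h3.congr_fderiv e2

/-- Change of variables: as `S` is bijective, the image of `dom` under `S` omits at most the images of
the pairs with a vanishing component, that is the graphs of `G` and `-G`, which are null. -/
lemma map_nu (h : DualityMap G Λ) (hn : n ≠ 0) : (nu G).map (S G) = volume := by
  have haar : (volume : Measure (Euc n × Euc n)).IsAddHaarMeasure := by
    rw [Measure.volume_eq_prod]; infer_instance
  have h1 := map_withDensity_abs_det_fderiv_eq_addHaar (volume : Measure (Euc n × Euc n))
    measurableSet_dom.nullMeasurableSet
    (fun p hp => (h.hasFDerivAt_S hp).hasFDerivWithinAt) h.S_injective.injOn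
  rw [nu, h1]
  have : Nontrivial (Euc n) := by
    have : NeZero n := ⟨hn⟩
    infer_instance
  have graph : ∀ F : Euc n → Euc n, Continuous F →
      (volume : Measure (Euc n × Euc n)) {p | p.2 = F p.1} = 0 := by
    intro F hF
    have ms : MeasurableSet {p : Euc n × Euc n | p.2 = F p.1} :=
      measurableSet_eq_fun measurable_snd (hF.measurable.comp measurable_fst)
    rw [Measure.volume_eq_prod, Measure.measure_prod_null ms]
    refine .of_forall fun x => ?_
    have : Prod.mk x ⁻¹' {p : Euc n × Euc n | p.2 = F p.1} = {F x} := by ext; simp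
    beta_reduce
    rw [this]; simp
  refine Measure.restrict_eq_self_of_ae_mem ?_
  rw [ae_iff]
  refine measure_mono_null (t := {p | p.2 = G p.1} ∪ {p | p.2 = -G p.1}) ?_
    (measure_union_null (graph G h.cont) (graph _ h.cont.neg))
  intro p hp
  obtain ⟨⟨x, x'⟩, rfl⟩ := h.S_surjective p
  have : ¬ ((x, x') ∈ dom n) := fun hx => hp ⟨_, hx, rfl⟩
  simp only [dom, Set.mem_ofPred_eq, not_and_or, not_not] at this
  rcases this with rfl | rfl
  · right; simp [S, h.zero]
  · left; simp [S, h.zero]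

/-- The hyperbolic dilation `(x, x') ↦ (eᵘ x, e⁻ᵘ x')`, with parameter `u`. -/
def dil (u : ℝ) (p : Euc n × Euc n) : Euc n × Euc n := (Real.exp u • p.1, Real.exp (-u) • p.2)

lemma measurePreserving_dil (u : ℝ) : MeasurePreserving (dil (n := n) u) := by
  refine ⟨by unfold dil; fun_prop, ?_⟩
  have e : dil (n := n) u = Prod.map (Real.exp u • ·) (Real.exp (-u) • ·) := rfl
  rw [e, Measure.volume_eq_prod, ← Measure.map_prod_map _ _ (by fun_prop) (by fun_prop),
    Measure.map_addHaar_smul _ (Real.exp_pos _).ne', Measure.map_addHaar_smul _ (Real.exp_pos _).ne',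
    Measure.prod_smul_left, Measure.prod_smul_right, smul_smul,
    ← ENNReal.ofReal_mul (abs_nonneg _), ← abs_mul, ← mul_inv, ← mul_pow, ← Real.exp_add]
  simp

lemma measurableEmbedding_dil (u : ℝ) : MeasurableEmbedding (dil (n := n) u) :=
  ((Homeomorph.smulOfNeZero (Real.exp u) (Real.exp_pos _).ne').prodCongr
    (Homeomorph.smulOfNeZero (Real.exp (-u)) (Real.exp_pos _).ne')).measurableEmbedding

/-- The derivative of a homogeneous map is invariant under dilations, so `nu` inherits the
invariance of Lebesgue measure under `(x, x') ↦ (eᵘ x, e⁻ᵘ x')`. -/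
lemma dil_nu (h : DualityMap G Λ) (u : ℝ) : MeasurePreserving (dil u) (nu G) (nu G) := by
  have hd := measurePreserving_dil (n := n) u
  refine ⟨hd.measurable, ?_⟩
  ext s hs
  rw [Measure.map_apply hd.measurable hs, nu, withDensity_apply _ hs,
    withDensity_apply _ (hd.measurable hs), Measure.restrict_restrict hs,
    Measure.restrict_restrict (hd.measurable hs)]
  have e : dil u ⁻¹' s ∩ dom n = dil u ⁻¹' (s ∩ dom n) := by
    ext p; simp [dil, dom, (Real.exp_pos _).ne']
  rw [e, ← hd.setLIntegral_comp_preimage_emb (measurableEmbedding_dil u) _ (s ∩ dom n)]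
  refine setLIntegral_congr_fun (hd.measurable (hs.inter measurableSet_dom)) fun p hp => ?_
  rw [← e] at hp
  simp only [dS, dil]
  rw [h.fderiv_hom (Real.exp_pos _).ne' hp.2.1, h.fderiv_hom (Real.exp_pos _).ne' hp.2.2]

end DualityMap

/-! ### Complex dilations -/

namespace DualityMap
variable {n : ℕ} {G : Euc n → Euc n} {Λ : ℝ}

/-- The coefficient of `e^{2w}` in the exponent `L`. -/
def cX (G : Euc n → Euc n) (ε : ℝ) (p : Euc n × Euc n) : ℂ := ⟨-ε * A G p.1, ⟪G p.1, p.1⟫⟩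
/-- The coefficient of `e^{-2w}` in the exponent `L`. -/
def cY (G : Euc n → Euc n) (ε : ℝ) (p : Euc n × Euc n) : ℂ := ⟨-ε * A G p.2, -⟪G p.2, p.2⟫⟩
/-- The term of the exponent `L` that does not depend on `w`. -/
def cZ (G : Euc n → Euc n) (ε : ℝ) (p : Euc n × Euc n) : ℂ :=
  ⟨-ε * R G p, ⟪p.2, G p.1⟫ - ⟪p.1, G p.2⟫⟩

/-- The exponent `i⟨a, b⟩ - ε (|a|² + |b|²)`, where `(a, b) = S p`, composed with the dilation of complex
parameter `w`. At `w = 0` it is that exponent itself; at `w = iπ/4` its real part is `-(P + ε R)`. -/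
def L (G : Euc n → Euc n) (ε : ℝ) (w : ℂ) (p : Euc n × Euc n) : ℂ :=
  Complex.exp (2 * w) * cX G ε p + Complex.exp (-(2 * w)) * cY G ε p + cZ G ε p

lemma continuous_mk' {X : Type*} [TopologicalSpace X] {f g : X → ℝ} (hf : Continuous f)
    (hg : Continuous g) : Continuous (fun x => (⟨f x, g x⟩ : ℂ)) := by
  have : (fun x => (⟨f x, g x⟩ : ℂ)) = fun x => (f x : ℂ) + (g x : ℂ) * Complex.I := by
    funext x; exact Complex.mk_eq_add_mul_I _ _
  rw [this]; fun_prop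

lemma continuous_cX (h : DualityMap G Λ) (ε : ℝ) : Continuous (cX G ε) := by
  have := h.cont
  exact continuous_mk' (by unfold A; fun_prop) (by fun_prop)
lemma continuous_cY (h : DualityMap G Λ) (ε : ℝ) : Continuous (cY G ε) := by
  have := h.cont
  exact continuous_mk' (by unfold A; fun_prop) (by fun_prop)
lemma continuous_cZ (h : DualityMap G Λ) (ε : ℝ) : Continuous (cZ G ε) := by
  have := h.cont
  exact continuous_mk' (by unfold R; fun_prop) (by fun_prop)

lemma continuous_L (h : DualityMap G Λ) (ε : ℝ) (w : ℂ) : Continuous (L G ε w) := by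
  have := h.continuous_cX ε
  have := h.continuous_cY ε
  have := h.continuous_cZ ε
  unfold L; fun_prop

/-- A real dilation of the point is a real translation of the parameter. -/
lemma L_dil (h : DualityMap G Λ) (ε : ℝ) (w : ℂ) (u : ℝ) (p : Euc n × Euc n) :
    L G ε w (dil u p) = L G ε (w + u) p := by
  have e1 : Real.exp u * Real.exp u = Real.exp (2 * u) := by rw [← Real.exp_add]; ring_nf
  have e2 : Real.exp (-u) * Real.exp (-u) = Real.exp (-(2 * u)) := by rw [← Real.exp_add]; ring_nf
  have e3 : Real.exp u * Real.exp (-u) = 1 := by rw [← Real.exp_add]; simp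
  have x : cX G ε (dil u p) = Real.exp (2 * u) * cX G ε p := by
    apply Complex.ext
    · simp only [cX, dil, A, h.hom, norm_smul, Complex.re_ofReal_mul, Real.norm_eq_abs, mul_pow,
        sq_abs, ← e1]; ring
    · simp only [cX, dil, h.hom, inner_smul_left, inner_smul_right, Complex.im_ofReal_mul, ← e1]
      simp; ring
  have y : cY G ε (dil u p) = Real.exp (-(2 * u)) * cY G ε p := by
    apply Complex.ext
    · simp only [cY, dil, A, h.hom, norm_smul, Complex.re_ofReal_mul, Real.norm_eq_abs, mul_pow,
        sq_abs, ← e2]; ring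
    · simp only [cY, dil, h.hom, inner_smul_left, inner_smul_right, Complex.im_ofReal_mul, ← e2]
      simp; ring
  have z : cZ G ε (dil u p) = cZ G ε p := by
    have e4 : ∀ r, Real.exp u * (Real.exp (-u) * r) = r := fun r => by rw [← mul_assoc, e3, one_mul]
    have e5 : ∀ r, Real.exp (-u) * (Real.exp u * r) = r := fun r => by
      rw [← mul_assoc, mul_comm (Real.exp (-u)), e3, one_mul]
    apply Complex.ext
    · simp [cZ, dil, R, h.hom, inner_smul_left, inner_smul_right, e4, e5]
    · simp [cZ, dil, h.hom, inner_smul_left, inner_smul_right, e4, e5]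
  rw [L, x, y, z, L, mul_add, neg_add, Complex.exp_add, Complex.exp_add]
  push_cast
  ring

lemma L_re (ε θ : ℝ) (p : Euc n × Euc n) :
    (L G ε (θ * Complex.I) p).re = -(Real.sin (2 * θ) * P G p +
      ε * (Real.cos (2 * θ) * (A G p.1 + A G p.2) + R G p)) := by
  have e1 : Complex.exp (2 * (θ * Complex.I)) = Real.cos (2 * θ) + Real.sin (2 * θ) * Complex.I := by
    rw [show 2 * (θ * Complex.I) = ((2 * θ : ℝ) : ℂ) * Complex.I by push_cast; ring,
      Complex.exp_mul_I]; push_cast; rfl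
  have e2 : Complex.exp (-(2 * (θ * Complex.I))) =
      Real.cos (2 * θ) - Real.sin (2 * θ) * Complex.I := by
    rw [show -(2 * (θ * Complex.I)) = (((-(2 * θ)) : ℝ) : ℂ) * Complex.I by push_cast; ring,
      Complex.exp_mul_I, ← Complex.ofReal_cos, ← Complex.ofReal_sin, Real.cos_neg, Real.sin_neg]
    push_cast; ring
  simp only [L, e1, e2, cX, cY, cZ, P, Complex.add_re, Complex.sub_re, Complex.sub_im, Complex.mul_re,
    Complex.add_im, Complex.mul_im, Complex.ofReal_re, Complex.ofReal_im, Complex.I_re, Complex.I_im]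
  ring

/-- Uniform Gaussian decay of `exp L` for arguments near the segment `[0, π/4] i`. -/
lemma L_re_le (h : DualityMap G Λ) {ε : ℝ} (ε0 : 0 < ε) {w : ℂ}
    (hw : -(ε / (2 * Λ)) ≤ Real.sin (2 * w.im) - 2 * ε * Λ * (1 - Real.cos (2 * w.im)))
    (hu : |w.re| ≤ 1) (p : Euc n × Euc n) :
    (L G ε w p).re ≤ -(ε / (2 * Λ) * Real.exp (-2) * P G p) := by
  have e : L G ε w p = L G ε (w.im * Complex.I) (dil w.re p) := by
    rw [h.L_dil]; congr 1; rw [add_comm]; exact (Complex.re_add_im w).symm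
  have hΛ := h.pos
  have hP : Real.exp (-2) * P G p ≤ P G (dil w.re p) := by
    obtain ⟨u1, u2⟩ := abs_le.1 hu
    have a1 : Real.exp (-2) ≤ Real.exp w.re * Real.exp w.re := by
      rw [← Real.exp_add]; exact Real.exp_le_exp.2 (by linarith)
    have a2 : Real.exp (-2) ≤ Real.exp (-w.re) * Real.exp (-w.re) := by
      rw [← Real.exp_add]; exact Real.exp_le_exp.2 (by linarith)
    have b1 := mul_le_mul_of_nonneg_right a1 (h.nonneg p.1)
    have b2 := mul_le_mul_of_nonneg_right a2 (h.nonneg p.2)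
    simp only [P, dil, h.hom, inner_smul_left, inner_smul_right]
    simp only [conj_trivial]
    linarith
  rw [e, L_re]
  set q := dil w.re p
  set s := Real.sin (2 * w.im)
  set c := Real.cos (2 * w.im)
  have c1 : 0 ≤ 1 - c := by have := Real.cos_le_one (2 * w.im); linarith
  have q1 := h.P_le q
  rw [sq_S] at q1
  have q2 : A G q.1 + A G q.2 ≤ 2 * Λ * P G q := by
    have := h.A_le q.1; have := h.A_le q.2; simp only [P]; linarith
  have q3 : P G q / Λ ≤ A G q.1 + A G q.2 + R G q := by rw [div_le_iff₀ hΛ]; linarith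
  have q4 := mul_le_mul_of_nonneg_left q2 c1
  have q5 := mul_le_mul_of_nonneg_right hw (h.P_nonneg q)
  have q6 := mul_le_mul_of_nonneg_left hP (by positivity : 0 ≤ ε / (2 * Λ))
  have q7 : ε / (2 * Λ) * P G q = ε * (P G q / Λ) / 2 := by field_simp
  have q8 : ε * (P G q / Λ - (1 - c) * (2 * Λ * P G q)) ≤ ε * (c * (A G q.1 + A G q.2) + R G q) := by
    gcongr; linarith
  linarith

lemma norm_L' (h : DualityMap G Λ) {ε : ℝ} (ε0 : 0 < ε) {w : ℂ} (hu : |w.re| ≤ 1)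
    (p : Euc n × Euc n) :
    ‖Complex.exp (2 * w) * (2 * cX G ε p) - Complex.exp (-(2 * w)) * (2 * cY G ε p)‖ ≤
      2 * Real.exp 2 * (1 + 2 * Λ * ε) * P G p := by
  obtain ⟨u1, u2⟩ := abs_le.1 hu
  have A0 : ∀ x, 0 ≤ A G x := fun x => by unfold A; positivity
  have x : ‖cX G ε p‖ ≤ (1 + 2 * Λ * ε) * ⟪G p.1, p.1⟫ := by
    refine (Complex.norm_le_abs_re_add_abs_im _).trans ?_
    simp only [cX, abs_mul, abs_neg, abs_of_pos ε0, abs_of_nonneg (A0 _), abs_of_nonneg (h.nonneg _)]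
    have := mul_le_mul_of_nonneg_left (h.A_le p.1) ε0.le
    linarith
  have y : ‖cY G ε p‖ ≤ (1 + 2 * Λ * ε) * ⟪G p.2, p.2⟫ := by
    refine (Complex.norm_le_abs_re_add_abs_im _).trans ?_
    simp only [cY, abs_mul, abs_neg, abs_of_pos ε0, abs_of_nonneg (A0 _), abs_of_nonneg (h.nonneg _)]
    have := mul_le_mul_of_nonneg_left (h.A_le p.2) ε0.le
    linarith
  have z1 : ‖Complex.exp (2 * w)‖ ≤ Real.exp 2 := by
    rw [Complex.norm_exp]; refine Real.exp_le_exp.2 ?_; simp; linarith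
  have z2 : ‖Complex.exp (-(2 * w))‖ ≤ Real.exp 2 := by
    rw [Complex.norm_exp]; refine Real.exp_le_exp.2 ?_; simp; linarith
  refine (norm_sub_le _ _).trans ?_
  rw [norm_mul, norm_mul, norm_mul, norm_mul, Complex.norm_ofNat]
  have := mul_le_mul z1 x (norm_nonneg _) (Real.exp_pos _).le
  have := mul_le_mul z2 y (norm_nonneg _) (Real.exp_pos _).le
  simp only [P]
  linarith

lemma gauss_integrable {c : ℝ} (hc : 0 < c) :
    Integrable (fun p : Euc n × Euc n => Real.exp (-(c * (‖p.1‖ ^ 2 + ‖p.2‖ ^ 2)))) := by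
  have h1 : Integrable (fun x : Euc n => Real.exp (-(c * ‖x‖ ^ 2))) := by
    have := (GaussianFourier.integrable_cexp_neg_mul_sq_norm_add (V := Euc n) (b := c)
      (by simpa using hc) 0 0).norm
    refine this.congr (.of_forall fun x => ?_)
    simp [Complex.norm_exp, ← Complex.ofReal_pow]
  have := h1.mul_prod h1
  rw [Measure.volume_eq_prod]
  refine this.congr (.of_forall fun x => ?_)
  beta_reduce
  rw [← Real.exp_add]; ring_nf

lemma integrable_P (h : DualityMap G Λ) (hn : n ≠ 0) {κ : ℝ} (κ0 : 0 < κ) :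
    Integrable (fun p => Real.exp (-(κ * P G p))) (nu G) := by
  have hΛ := h.pos
  have h1 := gauss_integrable (n := n) (c := κ / (4 * Λ)) (by positivity)
  rw [← h.map_nu hn] at h1
  have h2 := h1.comp_measurable h.continuous_S.measurable
  refine h2.mono' ?_ (.of_forall fun p => ?_)
  · have := h.continuous_P
    exact Continuous.aestronglyMeasurable (by fun_prop)
  · rw [Real.norm_eq_abs, abs_of_pos (Real.exp_pos _)]
    refine Real.exp_le_exp.2 (neg_le_neg ?_)
    have := mul_le_mul_of_nonneg_left (h.sq_S_le p) (by positivity : 0 ≤ κ / (4 * Λ))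
    refine this.trans (le_of_eq ?_)
    field_simp

lemma integral_dil (h : DualityMap G Λ) (ε : ℝ) (w : ℂ) (u : ℝ) :
    ∫ p, Complex.exp (L G ε (w + u) p) ∂(nu G) = ∫ p, Complex.exp (L G ε w p) ∂(nu G) := by
  rw [← (h.dil_nu u).integral_comp (measurableEmbedding_dil u) fun p => Complex.exp (L G ε w p)]
  simp only [h.L_dil]

lemma hasDerivAt_L (ε : ℝ) (w : ℂ) (p : Euc n × Euc n) :
    HasDerivAt (fun w => L G ε w p)
      (Complex.exp (2 * w) * (2 * cX G ε p) - Complex.exp (-(2 * w)) * (2 * cY G ε p)) w := by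
  have h1 : HasDerivAt (fun w : ℂ => 2 * w) 2 w := by simpa using (hasDerivAt_id w).const_mul 2
  have := ((h1.cexp.mul_const (cX G ε p)).add (h1.neg.cexp.mul_const (cY G ε p))).add_const (cZ G ε p)
  exact this.congr_deriv (by rw [Pi.neg_apply]; ring)

/-- The integral is a holomorphic function of the dilation parameter, and by `integral_dil` it is
constant in real directions, so its complex derivative vanishes. -/
lemma hasDerivAt_Phi (h : DualityMap G Λ) (hn : n ≠ 0) {ε : ℝ} (ε0 : 0 < ε) (hε : 2 * ε * Λ ≤ 1)
    {θ : ℝ} (h0 : 0 ≤ θ) (h1 : θ ≤ Real.pi / 4) :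
    HasDerivAt (fun w => ∫ p, Complex.exp (L G ε w p) ∂(nu G)) 0 (θ * Complex.I) := by
  have hΛ := h.pos
  set f : ℂ → ℝ := fun w => Real.sin (2 * w.im) - 2 * ε * Λ * (1 - Real.cos (2 * w.im)) with hf
  have cf : Continuous f := by fun_prop
  have f0 : -(ε / (2 * Λ)) < f (θ * Complex.I) := by
    have s0 : 0 ≤ Real.sin (2 * θ) := Real.sin_nonneg_of_nonneg_of_le_pi (by linarith) (by linarith)
    have c0 : 0 ≤ Real.cos (2 * θ) := Real.cos_nonneg_of_neg_pi_div_two_le_of_le (by linarith) (by linarith)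
    have c1 := Real.cos_le_one (2 * θ)
    have sc := Real.sin_sq_add_cos_sq (2 * θ)
    have k : 1 - Real.cos (2 * θ) ≤ Real.sin (2 * θ) := by nlinarith
    have : 0 < ε / (2 * Λ) := by positivity
    have : 2 * ε * Λ * (1 - Real.cos (2 * θ)) ≤ 1 * (1 - Real.cos (2 * θ)) := by
      gcongr
    simp [hf]
    linarith
  have ev : {w : ℂ | -(ε / (2 * Λ)) < f w ∧ |w.re| < 1} ∈ nhds (θ * Complex.I : ℂ) := by
    refine IsOpen.mem_nhds ?_ ⟨f0, by simp⟩
    exact (isOpen_lt continuous_const cf).inter (isOpen_lt (f := fun w : ℂ => |w.re|) (by fun_prop) continuous_const)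
  set κ := ε / (2 * Λ) * Real.exp (-2) with hκ
  have κ0 : 0 < κ := by positivity
  set M := 2 * Real.exp 2 * (1 + 2 * Λ * ε) with hM
  have M0 : 0 < M := by positivity
  have key := hasDerivAt_integral_of_dominated_loc_of_deriv_le (μ := nu G) (𝕜 := ℂ)
    (F := fun w p => Complex.exp (L G ε w p))
    (F' := fun w p => Complex.exp (L G ε w p) *
      (Complex.exp (2 * w) * (2 * cX G ε p) - Complex.exp (-(2 * w)) * (2 * cY G ε p)))
    (x₀ := (θ * Complex.I : ℂ)) (s := {w : ℂ | -(ε / (2 * Λ)) < f w ∧ |w.re| < 1})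
    (bound := fun p => M * (2 / κ) * Real.exp (-(κ / 2 * P G p))) ev
    (.of_forall fun w => by
      have := h.continuous_L ε w
      exact Continuous.aestronglyMeasurable (by fun_prop))
    (by
      refine (h.integrable_P hn κ0).mono' ?_ (.of_forall fun p => ?_)
      · have := h.continuous_L ε (θ * Complex.I)
        exact Continuous.aestronglyMeasurable (by fun_prop)
      · rw [Complex.norm_exp]
        exact Real.exp_le_exp.2 (h.L_re_le ε0 f0.le (by simp) p))
    (by
      have := h.continuous_L ε (θ * Complex.I)
      have := h.continuous_cX ε
      have := h.continuous_cY ε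
      exact Continuous.aestronglyMeasurable (by fun_prop))
    (.of_forall fun p w hw => by
      rw [norm_mul, Complex.norm_exp]
      have b1 := Real.exp_le_exp.2 (h.L_re_le ε0 hw.1.le hw.2.le p)
      have b2 := h.norm_L' ε0 hw.2.le p
      refine (mul_le_mul b1 b2 (norm_nonneg _) (Real.exp_pos _).le).trans ?_
      have b3 := Real.add_one_le_exp (κ / 2 * P G p)
      have b4 : Real.exp (-(κ * P G p)) = Real.exp (-(κ / 2 * P G p)) * Real.exp (-(κ / 2 * P G p)) := by
        rw [← Real.exp_add]; ring_nf
      have b5 : Real.exp (-(κ / 2 * P G p)) * Real.exp (κ / 2 * P G p) = 1 := by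
        rw [← Real.exp_add]; simp
      have b6 : P G p * Real.exp (-(κ / 2 * P G p)) ≤ 2 / κ := by
        rw [le_div_iff₀ κ0]
        have := mul_le_mul_of_nonneg_left b3 (Real.exp_pos (-(κ / 2 * P G p))).le
        have := Real.exp_pos (-(κ / 2 * P G p))
        nlinarith
      rw [← hM, ← hκ, b4]
      calc _ = M * (P G p * Real.exp (-(κ / 2 * P G p))) * Real.exp (-(κ / 2 * P G p)) := by ring
        _ ≤ _ := by gcongr)
    ((h.integrable_P hn (half_pos κ0)).const_mul _)
    (.of_forall fun p w _ => (hasDerivAt_L ε w p).cexp)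
  have hd := key.2
  -- the integral is constant along real translations, so the complex derivative vanishes
  set D := ∫ p, Complex.exp (L G ε (θ * Complex.I) p) *
      (Complex.exp (2 * (θ * Complex.I)) * (2 * cX G ε p) -
        Complex.exp (-(2 * (θ * Complex.I))) * (2 * cY G ε p)) ∂(nu G) with hD
  have : D = 0 := by
    have t1 : HasDerivAt (fun u : ℝ => (θ * Complex.I : ℂ) + u) 1 0 := by
      simpa using (Complex.ofRealCLM.hasDerivAt (x := (0 : ℝ))).const_add (θ * Complex.I : ℂ)
    have t2 : HasDerivAt (fun u : ℝ => ∫ p, Complex.exp (L G ε (θ * Complex.I + u) p) ∂(nu G)) (D * 1) 0 :=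
      HasDerivAt.comp (h₂ := fun w => ∫ p, Complex.exp (L G ε w p) ∂(nu G)) 0 (by simpa using hd) t1
    simp only [h.integral_dil] at t2
    have := t2.unique (hasDerivAt_const _ _)
    simpa using this
  rw [← this]
  exact hd

/-- The integral does not change between the parameters `0` and `iπ/4`. -/
lemma Phi_eq (h : DualityMap G Λ) (hn : n ≠ 0) {ε : ℝ} (ε0 : 0 < ε) (hε : 2 * ε * Λ ≤ 1) :
    ∫ p, Complex.exp (L G ε ((Real.pi / 4 : ℝ) * Complex.I) p) ∂(nu G) =
      ∫ p, Complex.exp (L G ε 0 p) ∂(nu G) := by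
  set Φ := fun w => ∫ p, Complex.exp (L G ε w p) ∂(nu G) with hΦ
  have hd : ∀ θ ∈ Set.Icc 0 (Real.pi / 4), HasDerivAt (fun θ : ℝ => Φ (θ * Complex.I)) 0 θ := by
    intro θ hθ
    have t1 : HasDerivAt (fun u : ℝ => (u * Complex.I : ℂ)) (1 * Complex.I) θ :=
      (Complex.ofRealCLM.hasDerivAt (x := θ)).mul_const Complex.I
    have := HasDerivAt.comp θ (h.hasDerivAt_Phi hn ε0 hε hθ.1 hθ.2) t1
    rw [zero_mul] at this
    exact this
  have := constant_of_has_deriv_right_zero (f := fun θ : ℝ => Φ (θ * Complex.I))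
    (fun θ hθ => (hd θ hθ).continuousAt.continuousWithinAt)
    (fun θ hθ => (hd θ ⟨hθ.1, hθ.2.le⟩).hasDerivWithinAt) (Real.pi / 4)
    ⟨by positivity, le_rfl⟩
  simpa [hΦ] using this

end DualityMap

/-! ### Lower bound for the Gaussian volume product -/

namespace DualityMap
variable {n : ℕ} {G : Euc n → Euc n} {Λ : ℝ}

/-- Integrate first over `p.2`, then over `p.1`: both integrals are Gaussian. -/
lemma gauss_value {ε : ℝ} (ε0 : 0 < ε) :
    ‖∫ p : Euc n × Euc n, Complex.exp (-(ε : ℂ) * ‖p.2‖ ^ 2 + Complex.I * ⟪p.1, p.2⟫) *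
      Complex.exp (-(ε : ℂ) * ‖p.1‖ ^ 2)‖ = (Real.pi ^ 2 / (ε ^ 2 + 1 / 4)) ^ (n / 2 : ℝ) := by
  have hInt : Integrable (fun p : Euc n × Euc n =>
      Complex.exp (-(ε : ℂ) * ‖p.2‖ ^ 2 + Complex.I * ⟪p.1, p.2⟫) *
      Complex.exp (-(ε : ℂ) * ‖p.1‖ ^ 2)) := by
    refine (gauss_integrable ε0).mono' (Continuous.aestronglyMeasurable (by fun_prop))
      (.of_forall fun p => ?_)
    rw [← Complex.exp_add, Complex.norm_exp]
    refine Real.exp_le_exp.2 (le_of_eq ?_)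
    simp [← Complex.ofReal_pow]
    ring
  rw [Measure.volume_eq_prod] at hInt ⊢
  rw [integral_prod _ hInt]
  have hb : 0 < ((ε : ℂ)).re := by simpa
  have hδ : 0 < ε + 1 / (4 * ε) := by positivity
  have e1 : ∀ x : Euc n, ∫ y, Complex.exp (-(ε : ℂ) * ‖y‖ ^ 2 + Complex.I * ⟪x, y⟫) *
      Complex.exp (-(ε : ℂ) * ‖x‖ ^ 2) = (Real.pi / ε) ^ (n / 2 : ℂ) *
        Complex.exp (-((ε + 1 / (4 * ε) : ℝ) : ℂ) * ‖x‖ ^ 2) := by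
    intro x
    rw [integral_mul_const, GaussianFourier.integral_cexp_neg_mul_sq_norm_add hb, mul_assoc,
      ← Complex.exp_add, finrank_euclideanSpace_fin]
    congr 2
    have : (ε : ℂ) ≠ 0 := by exact_mod_cast ε0.ne'
    push_cast
    rw [Complex.I_sq]
    field_simp
    ring
  simp only [e1]
  rw [integral_const_mul, GaussianFourier.integral_cexp_neg_mul_sq_norm (by simpa using hδ),
    finrank_euclideanSpace_fin]
  have e2 : ∀ b : ℝ, 0 < b → ‖((Real.pi : ℂ) / b) ^ (n / 2 : ℂ)‖ = (Real.pi / b) ^ (n / 2 : ℝ) := by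
    intro b hb
    rw [show (Real.pi / b : ℂ) = ((Real.pi / b : ℝ) : ℂ) by push_cast; rfl,
      Complex.norm_cpow_eq_rpow_re_of_pos (by positivity)]
    congr 1
    rw [show (n / 2 : ℂ) = ((n / 2 : ℝ) : ℂ) by push_cast; rfl, Complex.ofReal_re]
  rw [norm_mul, e2 _ ε0, e2 _ hδ, ← Real.mul_rpow (by positivity) (by positivity)]
  congr 1
  field_simp

/-- At parameter `0` the integral is the explicit one of `gauss_value`; at `iπ/4` it is bounded by the
integral of the modulus of the integrand. -/
lemma gauss_le (h : DualityMap G Λ) (hn : n ≠ 0) {ε : ℝ} (ε0 : 0 < ε) (hε : 2 * ε * Λ < 1) :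
    (Real.pi ^ 2 / (ε ^ 2 + 1 / 4)) ^ (n / 2 : ℝ) ≤
      ∫ p, Real.exp (-((1 - 2 * ε * Λ) * P G p)) ∂(nu G) := by
  have e0 : ∀ p, Complex.exp (L G ε 0 p) =
      Complex.exp (-(ε : ℂ) * ‖(S G p).2‖ ^ 2 + Complex.I * ⟪(S G p).1, (S G p).2⟫) *
      Complex.exp (-(ε : ℂ) * ‖(S G p).1‖ ^ 2) := by
    intro p
    rw [← Complex.exp_add]
    congr 1
    have h1 : L G ε 0 p = ⟨-ε * (A G p.1 + A G p.2 + R G p), ⟪(S G p).1, (S G p).2⟫⟩ := by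
      apply Complex.ext
      · simp [L, cX, cY, cZ]; ring
      · simp only [L, cX, cY, cZ, S, inner_add_left, inner_sub_right]
        simp [real_inner_comm]
        ring
    rw [h1, ← sq_S, Complex.mk_eq_add_mul_I]
    push_cast; ring
  have e1 := h.Phi_eq hn ε0 hε.le
  simp only [e0] at e1
  have e2 := integral_map (μ := nu G) h.continuous_S.measurable.aemeasurable (f := fun p =>
    Complex.exp (-(ε : ℂ) * ‖p.2‖ ^ 2 + Complex.I * ⟪p.1, p.2⟫) *
      Complex.exp (-(ε : ℂ) * ‖p.1‖ ^ 2)) (Continuous.aestronglyMeasurable (by fun_prop))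
  rw [h.map_nu hn] at e2
  rw [← gauss_value ε0, e2, ← e1]
  refine norm_integral_le_of_norm_le (h.integrable_P hn (by linarith)) (.of_forall fun p => ?_)
  rw [Complex.norm_exp, L_re]
  refine Real.exp_le_exp.2 (neg_le_neg ?_)
  rw [show 2 * (Real.pi / 4) = Real.pi / 2 by ring, Real.sin_pi_div_two, Real.cos_pi_div_two]
  have := (abs_le.1 (abs_R_le (G := G) p)).1
  have := h.A_le p.1; have := h.A_le p.2
  have : -(2 * Λ * P G p) ≤ R G p := by simp only [P]; linarith
  have := mul_le_mul_of_nonneg_left this ε0.le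
  linarith

lemma lintegral_smul {f : Euc n → ℝ≥0∞} (hf : Measurable f) {r : ℝ} (hr : 0 < r) :
    ∫⁻ x, f (r • x) = ENNReal.ofReal (r ^ n)⁻¹ * ∫⁻ x, f x := by
  rw [← lintegral_map (g := fun x => r • x) hf (by fun_prop), Measure.map_addHaar_smul _ hr.ne',
    lintegral_smul_measure, finrank_euclideanSpace_fin, abs_of_pos (by positivity), smul_eq_mul]

/-- Kuperberg-type lower bound for the product of the Gaussian integrals of a norm and its dual. -/
theorem lower (h : DualityMap G Λ) (hn : n ≠ 0) {q : Euc n → ℝ} (cq : Continuous q)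
    (q0 : ∀ x, 0 ≤ q x) (qh : ∀ (t : ℝ) x, 0 ≤ t → q (t • x) = t * q x)
    (qs : ∀ x y, q (x - y) ≤ q x + q y) (qG : ∀ x, q (G x) ^ 2 ≤ ⟪G x, x⟫) :
    ENNReal.ofReal ((Real.pi / 2) ^ n) ≤ (∫⁻ x, ENNReal.ofReal (Real.exp (-⟪G x, x⟫))) *
      ∫⁻ x, ENNReal.ofReal (Real.exp (-(q x) ^ 2)) := by
  have hΛ := h.pos
  have cG := h.cont
  set I := (∫⁻ x, ENNReal.ofReal (Real.exp (-⟪G x, x⟫))) *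
      ∫⁻ x, ENNReal.ofReal (Real.exp (-(q x) ^ 2)) with hI
  have main : ∀ ε : ℝ, 0 < ε → 2 * ε * Λ < 1 → ENNReal.ofReal (((1 - 2 * ε * Λ) / 4) ^ n *
      (Real.pi ^ 2 / (ε ^ 2 + 1 / 4)) ^ (n / 2 : ℝ)) ≤ I := by
    intro ε ε0 hε
    set s := (1 - 2 * ε * Λ) / 4 with hs
    have s0 : 0 < s := by rw [hs]; linarith
    have h1 : ENNReal.ofReal ((Real.pi ^ 2 / (ε ^ 2 + 1 / 4)) ^ (n / 2 : ℝ)) ≤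
        ∫⁻ p, ENNReal.ofReal (Real.exp (-((1 - 2 * ε * Λ) * P G p))) ∂(nu G) := by
      rw [← ofReal_integral_eq_lintegral_ofReal (h.integrable_P hn (by linarith))
        (.of_forall fun p => (Real.exp_pos _).le)]
      exact ENNReal.ofReal_le_ofReal (h.gauss_le hn ε0 hε)
    have h2 : ∫⁻ p, ENNReal.ofReal (Real.exp (-((1 - 2 * ε * Λ) * P G p))) ∂(nu G) ≤
        ∫⁻ p : Euc n × Euc n, ENNReal.ofReal (Real.exp (-(s * ⟪G p.1, p.1⟫))) *
          ENNReal.ofReal (Real.exp (-(s * q p.2 ^ 2))) := by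
      have meas : Measurable fun p : Euc n × Euc n =>
          ENNReal.ofReal (Real.exp (-(s * ⟪G p.1, p.1⟫))) *
            ENNReal.ofReal (Real.exp (-(s * q p.2 ^ 2))) := by
        have m1 : Measurable fun p : Euc n × Euc n =>
            ENNReal.ofReal (Real.exp (-(s * ⟪G p.1, p.1⟫))) :=
          (Continuous.measurable (by fun_prop)).ennreal_ofReal
        have m2 : Measurable fun p : Euc n × Euc n =>
            ENNReal.ofReal (Real.exp (-(s * q p.2 ^ 2))) :=
          (Continuous.measurable (by fun_prop)).ennreal_ofReal
        exact m1.mul m2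
      rw [← h.map_nu hn, lintegral_map meas h.continuous_S.measurable]
      refine lintegral_mono fun p => ?_
      rw [← ENNReal.ofReal_mul (Real.exp_pos _).le, ← Real.exp_add]
      refine ENNReal.ofReal_le_ofReal (Real.exp_le_exp.2 ?_)
      -- each of `a1`, `a2` is the parallelogram bound `‖x + x'‖² ≤ 2 (‖x‖² + ‖x'‖²)`, so the sum of
      -- the two squared norms is at most `4 P`, which is where the factor `1/4` in `s` comes from
      have a1 : ⟪G (S G p).1, (S G p).1⟫ ≤ 2 * P G p := by
        have c1 := h.cs (p.1 + p.2) ((2 : ℝ) • p.1)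
        have c2 := h.cs (p.1 + p.2) ((2 : ℝ) • p.2)
        simp only [h.hom, inner_smul_right, inner_smul_left, conj_trivial] at c1 c2
        have : ⟪G (S G p).1, (S G p).1⟫ = ⟪G (p.1 + p.2), p.1⟫ + ⟪G (p.1 + p.2), p.2⟫ := by
          simp only [S, inner_add_right]
        have : ⟪G (S G p).1, (S G p).1⟫ = ⟪G (p.1 + p.2), p.1 + p.2⟫ := rfl
        simp only [P]
        linarith
      have a2 : q (S G p).2 ^ 2 ≤ 2 * P G p := by
        have c1 := qs (G p.1) (G p.2)
        have c2 := qG p.1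
        have c3 := qG p.2
        have c4 : q (S G p).2 ^ 2 ≤ (q (G p.1) + q (G p.2)) ^ 2 :=
          pow_le_pow_left₀ (q0 _) c1 2
        simp only [P]
        nlinarith [sq_nonneg (q (G p.1) - q (G p.2))]
      have : s * (⟪G (S G p).1, (S G p).1⟫ + q (S G p).2 ^ 2) ≤ s * (4 * P G p) :=
        mul_le_mul_of_nonneg_left (by linarith) s0.le
      rw [hs] at this ⊢
      linarith
    have h3 : ∫⁻ p : Euc n × Euc n, ENNReal.ofReal (Real.exp (-(s * ⟪G p.1, p.1⟫))) *
          ENNReal.ofReal (Real.exp (-(s * q p.2 ^ 2))) = ENNReal.ofReal (s ^ n)⁻¹ * I := by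
      rw [Measure.volume_eq_prod, lintegral_prod_mul
        (f := fun x => ENNReal.ofReal (Real.exp (-(s * ⟪G x, x⟫))))
        (g := fun x => ENNReal.ofReal (Real.exp (-(s * q x ^ 2))))
        (Continuous.measurable (by fun_prop)).ennreal_ofReal.aemeasurable
        (Continuous.measurable (by fun_prop)).ennreal_ofReal.aemeasurable]
      have r0 : 0 < √s := Real.sqrt_pos.2 s0
      have l1 := lintegral_smul (f := fun x => ENNReal.ofReal (Real.exp (-⟪G x, x⟫)))
        (Continuous.measurable (by fun_prop)).ennreal_ofReal r0
      have l2 := lintegral_smul (f := fun x => ENNReal.ofReal (Real.exp (-(q x) ^ 2)))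
        (Continuous.measurable (by fun_prop)).ennreal_ofReal r0
      simp only [h.hom, inner_smul_left, inner_smul_right, conj_trivial, ← mul_assoc,
        Real.mul_self_sqrt s0.le] at l1
      simp only [qh _ _ r0.le, mul_pow, Real.sq_sqrt s0.le] at l2
      rw [l1, l2, hI]
      have : ENNReal.ofReal (s ^ n)⁻¹ = ENNReal.ofReal (√s ^ n)⁻¹ * ENNReal.ofReal (√s ^ n)⁻¹ := by
        rw [← ENNReal.ofReal_mul (by positivity), ← mul_inv, ← mul_pow, Real.mul_self_sqrt s0.le]
      rw [this]; ring
    rw [ENNReal.ofReal_mul (by positivity)]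
    calc _ ≤ ENNReal.ofReal (s ^ n) * (ENNReal.ofReal (s ^ n)⁻¹ * I) := by
          gcongr; exact (h1.trans h2).trans_eq h3
      _ = I := by
          rw [← mul_assoc, ← ENNReal.ofReal_mul (by positivity), mul_inv_cancel₀ (by positivity)]
          simp
  have lim : Filter.Tendsto (fun ε : ℝ => ENNReal.ofReal (((1 - 2 * ε * Λ) / 4) ^ n *
      (Real.pi ^ 2 / (ε ^ 2 + 1 / 4)) ^ (n / 2 : ℝ))) (nhdsWithin 0 (Set.Ioi 0))
      (nhds (ENNReal.ofReal ((Real.pi / 2) ^ n))) := by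
    have c : Continuous (fun ε : ℝ => ENNReal.ofReal (((1 - 2 * ε * Λ) / 4) ^ n *
      (Real.pi ^ 2 / (ε ^ 2 + 1 / 4)) ^ (n / 2 : ℝ))) := by
      refine ENNReal.continuous_ofReal.comp (Continuous.mul (by fun_prop) ?_)
      refine Continuous.rpow_const (Continuous.div (by fun_prop) (by fun_prop) fun x => by positivity)
        fun x => Or.inr (by positivity)
    have := (c.tendsto 0).mono_left (nhdsWithin_le_nhds (s := Set.Ioi 0))
    convert this using 3
    have : (Real.pi ^ 2 / (0 ^ 2 + 1 / 4)) ^ (n / 2 : ℝ) = (2 * Real.pi) ^ n := by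
      rw [show Real.pi ^ 2 / (0 ^ 2 + 1 / 4) = (2 * Real.pi) ^ (2 : ℝ) by
        rw [Real.rpow_two]; ring, ← Real.rpow_mul (by positivity), ← Real.rpow_natCast]
      congr 1; ring
    rw [this, ← mul_pow]; congr 1; ring
  refine le_of_tendsto lim ?_
  have : ∀ᶠ ε : ℝ in nhdsWithin 0 (Set.Ioi 0), 2 * ε * Λ < 1 := by
    refine nhdsWithin_le_nhds ((isOpen_lt (by fun_prop) continuous_const).mem_nhds ?_)
    simp
  filter_upwards [this, self_mem_nhdsWithin] with ε h1 h2 using main ε h2 h1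

end DualityMap

/-! ### Smooth norms from even powers -/

namespace PowerNorm
variable {n : ℕ} (U : Finset (Euc n)) (k : ℕ)

/-- The sum `∑ ⟨u, x⟩^{2k+2}` of even powers of the functionals in `U`. -/
def N (x : Euc n) : ℝ := ∑ u ∈ U, ⟪u, x⟫ ^ (2 * k + 2)

/-- The `(2k+2)`-th root of `N`: the `ℓ^{2k+2}` norm of the family `⟨u, x⟩`. It is a seminorm, and a norm
if it vanishes only at `0`. -/
def nrm (x : Euc n) : ℝ := N U k x ^ (((2 * k + 2 : ℕ) : ℝ)⁻¹)

/-- The gradient of `nrm² / 2`. Where `nrm` vanishes all `⟨u, x⟩` vanish too, so the division by zero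
yields the correct value `0`. -/
def grad (x : Euc n) : Euc n := ∑ u ∈ U, ((⟪u, x⟫ / nrm U k x) ^ (2 * k) * ⟪u, x⟫) • u

variable {U k}

lemma even_pow_nonneg (a : ℝ) : 0 ≤ a ^ (2 * k + 2) :=
  Even.pow_nonneg ⟨k + 1, by ring⟩ a

lemma N_nonneg (x : Euc n) : 0 ≤ N U k x := Finset.sum_nonneg fun _ _ => even_pow_nonneg _

lemma nrm_nonneg (x : Euc n) : 0 ≤ nrm U k x := Real.rpow_nonneg (N_nonneg x) _

lemma nrm_pow (x : Euc n) : nrm U k x ^ (2 * k + 2) = N U k x :=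
  Real.rpow_inv_natCast_pow (N_nonneg x) (by omega)

lemma nrm_smul (t : ℝ) (x : Euc n) : nrm U k (t • x) = |t| * nrm U k x := by
  have : N U k (t • x) = |t| ^ (2 * k + 2) * N U k x := by
    have e : |t| ^ (2 * k + 2) = t ^ (2 * k + 2) := Even.pow_abs ⟨k + 1, by ring⟩ t
    rw [e, N, N, Finset.mul_sum]
    simp only [inner_smul_right, mul_pow]
  rw [nrm, this, Real.mul_rpow (by positivity) (N_nonneg x),
    Real.pow_rpow_inv_natCast (abs_nonneg t) (by omega), nrm]

lemma abs_inner_le {u : Euc n} (hu : u ∈ U) (x : Euc n) : |⟪u, x⟫| ≤ nrm U k x := by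
  refine le_of_pow_le_pow_left₀ (n := 2 * k + 2) (by omega) (nrm_nonneg x) ?_
  rw [nrm_pow, Even.pow_abs ⟨k + 1, by ring⟩]
  exact Finset.single_le_sum (f := fun u => ⟪u, x⟫ ^ (2 * k + 2)) (fun _ _ => even_pow_nonneg _) hu

lemma inner_eq_zero {x : Euc n} (hx : nrm U k x = 0) {u : Euc n} (hu : u ∈ U) : ⟪u, x⟫ = 0 := by
  have := abs_inner_le (k := k) hu x
  rw [hx] at this
  exact abs_eq_zero.1 (le_antisymm this (abs_nonneg _))

lemma inner_grad (x z : Euc n) :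
    ⟪grad U k x, z⟫ = ∑ u ∈ U, (⟪u, x⟫ / nrm U k x) ^ (2 * k) * ⟪u, x⟫ * ⟪u, z⟫ := by
  simp [grad, sum_inner, inner_smul_left]

lemma inner_grad_self (x : Euc n) : ⟪grad U k x, x⟫ = nrm U k x ^ 2 := by
  rw [inner_grad]
  by_cases hx : nrm U k x = 0
  · rw [hx, Finset.sum_eq_zero]
    · simp
    · intro u hu; rw [inner_eq_zero hx hu]; simp
  · have := nrm_pow (U := U) (k := k) x
    rw [N, pow_add] at this
    refine mul_left_cancel₀ (pow_ne_zero (2 * k) hx) ?_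
    rw [this, Finset.mul_sum]
    refine Finset.sum_congr rfl fun u _ => ?_
    rw [div_pow]; field_simp; ring

/-- Young's inequality for the conjugate exponents `2k+2` and `(2k+2)/(2k+1)`. -/
lemma young (a b : ℝ) :
    (2 * k + 2) * (a ^ (2 * k) * a * b) ≤ (2 * k + 1) * a ^ (2 * k + 2) + b ^ (2 * k + 2) := by
  have e : ∀ c : ℝ, |c| ^ (2 * k + 2) = c ^ (2 * k + 2) := Even.pow_abs ⟨k + 1, by ring⟩
  have e' : |a| ^ (2 * k) = a ^ (2 * k) := Even.pow_abs ⟨k, by ring⟩ a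
  have h0 : a ^ (2 * k) * a * b ≤ |a| ^ (2 * k) * |a| * |b| := by
    rw [e', mul_assoc, mul_assoc, ← abs_mul]
    have : 0 ≤ a ^ (2 * k) := Even.pow_nonneg ⟨k, two_mul k⟩ a
    gcongr
    exact le_abs_self _
  rw [← e a, ← e b]
  refine (mul_le_mul_of_nonneg_left h0 (by positivity)).trans ?_
  rcases (abs_nonneg a).eq_or_lt with ha | ha
  · rw [← ha]; simp
  · have h1 := one_add_mul_le_pow (a := |b| / |a| - 1) (by
      have : 0 ≤ |b| / |a| := by positivity
      linarith) (2 * k + 2)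
    rw [add_sub_cancel, div_pow, le_div_iff₀ (by positivity)] at h1
    push_cast at h1
    have h2 : (1 + (2 * (k : ℝ) + 2) * (|b| / |a| - 1)) * |a| ^ (2 * k + 2) =
        (2 * k + 2) * (|a| ^ (2 * k) * |a| * |b|) - (2 * k + 1) * |a| ^ (2 * k + 2) := by
      rw [pow_add]; field_simp; ring
    linarith

/-- Cauchy–Schwarz for the smooth norm; after normalization it is Young's inequality, summed over `U`. -/
lemma inner_grad_le (x z : Euc n) : ⟪grad U k x, z⟫ ≤ nrm U k x * nrm U k z := by
  rw [inner_grad]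
  by_cases hx : nrm U k x = 0
  · rw [hx, Finset.sum_eq_zero]
    · simp
    · intro u hu; rw [inner_eq_zero hx hu]; simp
  by_cases hz : nrm U k z = 0
  · rw [hz, Finset.sum_eq_zero]
    · simp
    · intro u hu; rw [inner_eq_zero hz hu]; simp
  have px := (nrm_nonneg (U := U) (k := k) x).lt_of_ne' hx
  have pz := (nrm_nonneg (U := U) (k := k) z).lt_of_ne' hz
  have one : ∀ y : Euc n, nrm U k y ≠ 0 → ∑ u ∈ U, (⟪u, y⟫ / nrm U k y) ^ (2 * k + 2) = 1 := by
    intro y hy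
    simp only [div_pow]
    rw [← Finset.sum_div, nrm_pow]
    refine div_self ?_
    change N U k y ≠ 0
    rw [← nrm_pow]; exact pow_ne_zero _ hy
  have h1 := Finset.sum_le_sum fun u (_ : u ∈ U) =>
    young (k := k) (⟪u, x⟫ / nrm U k x) (⟪u, z⟫ / nrm U k z)
  rw [Finset.sum_add_distrib, ← Finset.mul_sum, ← Finset.mul_sum, one x hx, one z hz] at h1
  have h2 : ∑ u ∈ U, (⟪u, x⟫ / nrm U k x) ^ (2 * k) * (⟪u, x⟫ / nrm U k x) * (⟪u, z⟫ / nrm U k z) ≤ 1 := by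
    have : (0 : ℝ) < 2 * k + 2 := by positivity
    nlinarith
  have h3 := mul_le_mul_of_nonneg_left h2 (mul_pos px pz).le
  rw [Finset.mul_sum, mul_one] at h3
  refine le_trans (le_of_eq (Finset.sum_congr rfl fun u _ => ?_)) h3
  field_simp

lemma grad_smul (t : ℝ) (x : Euc n) : grad U k (t • x) = t • grad U k x := by
  rcases eq_or_ne t 0 with rfl | ht
  · simp [grad]
  rw [grad, grad, Finset.smul_sum]
  refine Finset.sum_congr rfl fun u _ => ?_
  rw [smul_smul, nrm_smul, inner_smul_right]
  congr 1
  have : (t * ⟪u, x⟫ / (|t| * nrm U k x)) ^ (2 * k) = (⟪u, x⟫ / nrm U k x) ^ (2 * k) := by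
    rw [mul_div_mul_comm, mul_pow, div_pow t, Even.pow_abs ⟨k, by ring⟩, div_self (pow_ne_zero _ ht),
      one_mul]
  rw [this]; ring

lemma norm_grad_le (x : Euc n) : ‖grad U k x‖ ≤ (∑ u ∈ U, ‖u‖ ^ 2) * ‖x‖ := by
  rw [grad, Finset.sum_mul]
  refine norm_sum_le_of_le _ fun u hu => ?_
  have h1 : |⟪u, x⟫ / nrm U k x| ≤ 1 := by
    rw [abs_div, abs_of_nonneg (nrm_nonneg x)]
    exact div_le_one_of_le₀ (abs_inner_le hu x) (nrm_nonneg x)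
  rw [norm_smul, norm_mul, norm_pow, Real.norm_eq_abs, Real.norm_eq_abs]
  have h2 := pow_le_one₀ (n := 2 * k) (abs_nonneg _) h1
  have h3 := abs_real_inner_le_norm u x
  calc _ ≤ 1 * (‖u‖ * ‖x‖) * ‖u‖ := by gcongr
    _ = _ := by ring

lemma differentiableAt_grad (hU : ∀ x : Euc n, x ≠ 0 → nrm U k x ≠ 0)
    {x : Euc n} (hx : x ≠ 0) : DifferentiableAt ℝ (grad U k) x := by
  have hN : N U k x ≠ 0 := by rw [← nrm_pow]; exact pow_ne_zero _ (hU x hx)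
  have d0 : ∀ u : Euc n, DifferentiableAt ℝ (fun x => ⟪u, x⟫) x := fun u =>
    (innerSL ℝ u).differentiableAt
  have d1 : DifferentiableAt ℝ (N U k) x := by
    unfold N
    exact DifferentiableAt.fun_sum fun u _ => (d0 u).pow _
  have d2 : DifferentiableAt ℝ (nrm U k) x := d1.rpow_const (Or.inl hN)
  have := hU x hx
  unfold grad
  simp only [div_eq_mul_inv]
  exact DifferentiableAt.fun_sum fun u _ =>
    ((((d0 u).mul (d2.inv this)).pow _).mul (d0 u)).smul_const u

lemma continuous_grad (hU : ∀ x : Euc n, x ≠ 0 → nrm U k x ≠ 0) :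
    Continuous (grad U k) := by
  rw [continuous_iff_continuousAt]
  intro x
  by_cases hx : x = 0
  · subst hx
    have h0 : grad U k 0 = 0 := by simp [grad]
    rw [ContinuousAt, h0]
    refine squeeze_zero_norm (norm_grad_le) ?_
    have : Continuous fun x : Euc n => (∑ u ∈ U, ‖u‖ ^ 2) * ‖x‖ := by fun_prop
    simpa using this.tendsto 0
  · exact (differentiableAt_grad hU hx).continuousAt

/-- The Euclidean term `δ • x` makes the map strongly monotone. -/
lemma dualityMap (hU : ∀ x : Euc n, x ≠ 0 → nrm U k x ≠ 0)
    {δ : ℝ} (hδ : 0 < δ) : ∃ Λ, DualityMap (fun x => grad U k x + δ • x) Λ := by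
  set C := ∑ u ∈ U, ‖u‖ ^ 2 with hC
  have C0 : 0 ≤ C := by positivity
  have cs : ∀ x z, 2 * ⟪grad U k x, z⟫ ≤ ⟪grad U k x, x⟫ + ⟪grad U k z, z⟫ := by
    intro x z
    have := inner_grad_le (U := U) (k := k) x z
    rw [inner_grad_self, inner_grad_self]
    nlinarith [sq_nonneg (nrm U k x - nrm U k z)]
  have self : ∀ x, δ * ‖x‖ ^ 2 ≤ ⟪grad U k x + δ • x, x⟫ := by
    intro x
    rw [inner_add_left, inner_grad_self, inner_smul_left, real_inner_self_eq_norm_sq, conj_trivial]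
    nlinarith [sq_nonneg (nrm U k x)]
  refine ⟨(1 + (C + δ) ^ 2) / δ, ⟨?_, ?_, ?_, ?_, ?_, ?_, ?_⟩⟩
  · have := continuous_grad hU; fun_prop
  · intro t x; rw [grad_smul, smul_add, smul_comm]
  · intro x z
    have h1 := cs x z
    have h2 := sq_nonneg ‖x - z‖
    rw [norm_sub_sq_real] at h2
    simp only [inner_add_left, inner_smul_left, conj_trivial, real_inner_self_eq_norm_sq]
    nlinarith
  · positivity
  · intro x z
    have h1 := cs x z
    have h2 := cs z x
    have h3 : δ * ‖x - z‖ ^ 2 ≤ ⟪grad U k x + δ • x - (grad U k z + δ • z), x - z⟫ := by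
      rw [show grad U k x + δ • x - (grad U k z + δ • z) =
        (grad U k x - grad U k z) + δ • (x - z) by rw [smul_sub]; abel, inner_add_left,
        inner_smul_left, conj_trivial, real_inner_self_eq_norm_sq, inner_sub_left, inner_sub_right,
        inner_sub_right]
      linarith
    rw [div_mul_eq_mul_div, le_div_iff₀ hδ]
    have : 0 ≤ δ * ‖x - z‖ ^ 2 := by positivity
    nlinarith [sq_nonneg (C + δ)]
  · intro x
    have h1 : ‖grad U k x + δ • x‖ ≤ (C + δ) * ‖x‖ := by
      refine (norm_add_le _ _).trans ?_
      rw [norm_smul, Real.norm_eq_abs, abs_of_pos hδ, add_mul]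
      gcongr
      exact norm_grad_le x
    have h2 := pow_le_pow_left₀ (norm_nonneg _) h1 2
    have h3 := self x
    rw [div_mul_eq_mul_div, le_div_iff₀ hδ]
    have : 0 ≤ δ * ‖x‖ ^ 2 := by positivity
    have h4 := mul_le_mul_of_nonneg_right h2 hδ.le
    have h5 := mul_le_mul_of_nonneg_left h3 (sq_nonneg (C + δ))
    rw [mul_pow] at h4
    linarith
  · intro x hx
    have := differentiableAt_grad hU hx
    fun_prop

end PowerNorm

/-! ### Volume products of symmetric bodies -/

/-- A convex body symmetric about the origin, which is then an interior point. -/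
structure SymBody {n : ℕ} (W : Set (Euc n)) : Prop where
  conv : Convex ℝ W
  comp : IsCompact W
  sym : ∀ x ∈ W, -x ∈ W
  nhds : W ∈ nhds 0

namespace SymBody
variable {n : ℕ} {W T : Set (Euc n)}

lemma zero_mem (h : SymBody W) : (0 : Euc n) ∈ W := mem_of_mem_nhds h.nhds

lemma absorbent (h : SymBody W) : Absorbent ℝ W := absorbent_nhds_zero h.nhds

lemma exists_ball (h : SymBody W) : ∃ r > 0, Metric.closedBall (0 : Euc n) r ⊆ W :=
  Metric.nhds_basis_closedBall.mem_iff.1 h.nhds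

lemma exists_bound (h : SymBody W) : ∃ R > 0, W ⊆ Metric.closedBall (0 : Euc n) R :=
  h.comp.isBounded.subset_closedBall_lt 0 0

lemma polar (h : SymBody W) : SymBody (polarBody W) := by
  obtain ⟨r, r0, hr⟩ := h.exists_ball
  obtain ⟨R, R0, hR⟩ := h.exists_bound
  refine ⟨?_, ?_, ?_, ?_⟩
  · intro x hx y hy a b ha hb hab z hz
    rw [inner_add_left, inner_smul_left, inner_smul_left, conj_trivial, conj_trivial]
    nlinarith [mul_le_mul_of_nonneg_left (hx z hz) ha, mul_le_mul_of_nonneg_left (hy z hz) hb]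
  · refine Metric.isCompact_of_isClosed_isBounded ?_ ?_
    · have : polarBody W = ⋂ y ∈ W, {x | ⟪x, y⟫ ≤ 1} := by ext; simp [polarBody]
      rw [this]
      exact isClosed_biInter fun y _ => isClosed_le (by fun_prop) continuous_const
    · refine Metric.isBounded_closedBall (x := (0 : Euc n)) (r := 1 / r) |>.subset fun x hx => ?_
      rw [mem_closedBall_zero_iff, le_div_iff₀ r0]
      rcases eq_or_ne x 0 with rfl | hx0
      · simp
      have nx : 0 < ‖x‖ := norm_pos_iff.2 hx0
      have := hx ((r / ‖x‖) • x) (hr (by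
        rw [mem_closedBall_zero_iff, norm_smul, Real.norm_eq_abs, abs_of_pos (by positivity)]
        field_simp; exact le_rfl))
      rw [inner_smul_right, real_inner_self_eq_norm_sq] at this
      calc ‖x‖ * r = r / ‖x‖ * ‖x‖ ^ 2 := by field_simp
        _ ≤ 1 := this
  · intro x hx y hy
    have := hx (-y) (h.sym y hy)
    rwa [inner_neg_right, ← inner_neg_left] at this
  · refine Filter.mem_of_superset (Metric.closedBall_mem_nhds (0 : Euc n) (by positivity : 0 < 1 / R))
      fun x hx y hy => ?_
    rw [mem_closedBall_zero_iff] at hx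
    have hy := hR hy
    rw [mem_closedBall_zero_iff] at hy
    calc ⟪x, y⟫ ≤ ‖x‖ * ‖y‖ := real_inner_le_norm _ _
      _ ≤ 1 / R * R := by gcongr
      _ = 1 := by field_simp

lemma mem_iff (h : SymBody W) {x : Euc n} : x ∈ W ↔ gauge W x ≤ 1 := by
  rw [gauge_le_one_iff_mem_closure h.conv h.nhds, h.comp.isClosed.closure_eq]

lemma continuous_gauge (h : SymBody W) : Continuous (gauge W) := _root_.continuous_gauge h.conv h.nhds

lemma gauge_smul_nonneg {t : ℝ} (ht : 0 ≤ t) (x : Euc n) : gauge W (t • x) = t * gauge W x := by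
  rw [gauge_smul_of_nonneg ht, smul_eq_mul]

lemma gauge_pos (h : SymBody W) {x : Euc n} (hx : x ≠ 0) : 0 < gauge W x :=
  (_root_.gauge_pos h.absorbent (NormedSpace.isVonNBounded_of_isBounded _ h.comp.isBounded)).2 hx

lemma inner_le (h : SymBody W) (x y : Euc n) : ⟪x, y⟫ ≤ gauge W x * gauge (polarBody W) y := by
  rcases eq_or_ne x 0 with rfl | hx
  · simp
  rcases eq_or_ne y 0 with rfl | hy
  · simp
  have px := h.gauge_pos hx
  have py := h.polar.gauge_pos hy
  have hx' : (gauge W x)⁻¹ • x ∈ W := by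
    rw [h.mem_iff, gauge_smul_nonneg (by positivity), inv_mul_cancel₀ px.ne']
  have hy' : (gauge (polarBody W) y)⁻¹ • y ∈ polarBody W := by
    rw [h.polar.mem_iff, gauge_smul_nonneg (by positivity), inv_mul_cancel₀ py.ne']
  have := hy' _ hx'
  rw [inner_smul_left, inner_smul_right, conj_trivial, real_inner_comm] at this
  rw [← div_le_one (by positivity)]
  calc _ = _ := by field_simp
    _ ≤ 1 := this

/-- The gauge of the polar body is at most the support function. -/
lemma gauge_polar_le {y : Euc n} {c : ℝ} (hc : 0 ≤ c)
    (hy : ∀ x ∈ W, ⟪x, y⟫ ≤ c) : gauge (polarBody W) y ≤ c := by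
  refine le_of_forall_gt_imp_ge_of_dense fun c' hcle => ?_
  have c0 : 0 < c' := hc.trans_lt hcle
  refine gauge_le_of_mem c0.le ((Set.mem_smul_set_iff_inv_smul_mem₀ c0.ne' _ _).2 fun x hx => ?_)
  rw [inner_smul_left, conj_trivial, inv_mul_le_iff₀ c0, mul_one, real_inner_comm]
  exact (hy x hx).trans hcle.le

/-- The bipolar theorem, in terms of gauges. -/
lemma gauge_le (h : SymBody W) {x : Euc n} {c : ℝ} (hc : 0 ≤ c)
    (hx : ∀ y ∈ polarBody W, ⟪x, y⟫ ≤ c) : gauge W x ≤ c := by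
  refine le_of_forall_gt_imp_ge_of_dense fun c' hc' => ?_
  have c0 : 0 < c' := hc.trans_lt hc'
  refine gauge_le_of_mem c0.le ((Set.mem_smul_set_iff_inv_smul_mem₀ c0.ne' _ _).2 ?_)
  by_contra hn
  obtain ⟨f, u, hf, hu⟩ := geometric_hahn_banach_closed_point h.conv h.comp.isClosed hn
  have u0 : 0 < u := by simpa using hf 0 h.zero_mem
  set v := (InnerProductSpace.toDual ℝ (Euc n)).symm f with hv
  have fv : ∀ z, f z = ⟪v, z⟫ := fun z => by simp [hv]
  have hm : u⁻¹ • v ∈ polarBody W := fun z hz => by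
    rw [inner_smul_left, conj_trivial, inv_mul_le_iff₀ u0, mul_one, ← fv]
    exact (hf z hz).le
  have h1 := hx _ hm
  rw [fv, inner_smul_right, ← div_eq_inv_mul, lt_div_iff₀ c0] at hu
  rw [real_inner_comm, inner_smul_left, conj_trivial, inv_mul_le_iff₀ u0] at h1
  nlinarith

/-- The Gaussian integral of the gauge. -/
def gI (W : Set (Euc n)) : ℝ≥0∞ := ∫⁻ x, ENNReal.ofReal (Real.exp (-(gauge W x) ^ 2))

lemma gauge_ge (h : SymBody W) : ∃ κ > 0, ∀ x, κ * ‖x‖ ≤ gauge W x := by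
  obtain ⟨R, R0, hR⟩ := h.exists_bound
  refine ⟨R⁻¹, by positivity, fun x => ?_⟩
  rw [← div_eq_inv_mul]
  exact le_gauge_of_subset_closedBall h.absorbent R0.le hR

/-- For a norm on `ℝⁿ`, `∫ exp (-‖x‖²)` is `Γ(n/2 + 1)` times the volume of the open unit ball, and the
boundary of a convex set is null. -/
lemma gI_eq (h : SymBody W) : gI W = ENNReal.ofReal (Real.Gamma (n / 2 + 1)) * volume W := by
  obtain ⟨κ, κ0, hκ⟩ := h.gauge_ge
  have hi : Integrable (fun x => Real.exp (-(gauge W x) ^ 2)) := by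
    have h1 := gaussian_moment κ0 hκ 0
    simp only [inner_zero_left, Real.exp_zero, ENNReal.ofReal_one, mul_one] at h1
    have cg := h.continuous_gauge
    refine ⟨Continuous.aestronglyMeasurable (by fun_prop), ?_⟩
    rw [hasFiniteIntegral_iff_ofReal (.of_forall fun x => (Real.exp_pos _).le)]
    exact h1.lt_top
  have h2 := measure_lt_one_eq_integral_div_gamma (volume : Measure (Euc n)) (g := gauge W)
    gauge_zero (gauge_neg h.sym) (gauge_add_le h.conv h.absorbent)
    (fun {x} hx => by by_contra hn; exact (h.gauge_pos hn).ne' hx)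
    (fun r x => le_of_eq (by
      rw [← gauge_smul_nonneg (abs_nonneg r)]
      rcases abs_choice r with e | e <;> rw [e]
      rw [neg_smul, gauge_neg h.sym])) (p := 2) two_pos
  simp only [Real.rpow_two, finrank_euclideanSpace_fin] at h2
  have G0 : 0 < Real.Gamma (n / 2 + 1) := Real.Gamma_pos_of_pos (by positivity)
  have h3 : volume {x | gauge W x < 1} = volume W := by
    rw [setOfPred_gauge_lt_one_eq_interior h.conv h.nhds]
    refine le_antisymm (measure_mono interior_subset) ?_
    have : W ⊆ interior W ∪ frontier W := by
      rw [← closure_eq_interior_union_frontier]; exact subset_closure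
    refine (measure_mono this).trans ((measure_union_le _ _).trans ?_)
    rw [h.conv.addHaar_frontier volume, add_zero]
  rw [gI, ← ofReal_integral_eq_lintegral_ofReal hi (.of_forall fun x => (Real.exp_pos _).le), ← h3,
    h2, ← ENNReal.ofReal_mul G0.le]
  congr 1
  field_simp

/-- Santaló's inequality for a body and its polar. -/
lemma gI_upper (h : SymBody W) : gI W * gI (polarBody W) ≤ ENNReal.ofReal (Real.pi ^ n) := by
  obtain ⟨κ, κ0, hκ⟩ := h.gauge_ge
  obtain ⟨κ', κ0', hκle⟩ := h.polar.gauge_ge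
  exact santalo h.continuous_gauge h.polar.continuous_gauge (gauge_neg h.sym) h.inner_le
    (lt_min κ0 κ0')
    (fun x => (mul_le_mul_of_nonneg_right (min_le_left _ _) (norm_nonneg _)).trans (hκ x))
    (fun x => (mul_le_mul_of_nonneg_right (min_le_right _ _) (norm_nonneg _)).trans (hκle x))

/-- A symmetric body is approximated, up to the factor `5/4`, by the unit ball of a smooth norm. -/
lemma exists_dualityMap (h : SymBody T) : ∃ G Λ, DualityMap (n := n) G Λ ∧
    (∀ x, (4 / 5 * gauge T x) ^ 2 ≤ ⟪G x, x⟫) ∧ ∀ x ∈ T, ⟪G x, x⟫ ≤ (5 / 4) ^ 2 := by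
  obtain ⟨R, R0, hR⟩ := h.exists_bound
  have e0 : 0 < 1 / (9 * R) := by positivity
  obtain ⟨t, ht, tf, tc⟩ := h.polar.comp.finite_cover_balls e0
  lift t to Finset (Euc n) using tf
  obtain ⟨k, hk⟩ := pow_unbounded_of_one_lt (t.card : ℝ) (by norm_num : (1 : ℝ) < 5 / 4)
  have hg : ∀ x, 8 / 9 * gauge T x ≤ PowerNorm.nrm t k x := by
    intro x
    have b1 : gauge T x ≤ PowerNorm.nrm t k x + 1 / (9 * R) * ‖x‖ := by
      have := PowerNorm.nrm_nonneg (U := t) (k := k) x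
      refine h.gauge_le (by positivity) fun y hy => ?_
      obtain ⟨u, hu, hyu⟩ := Set.mem_iUnion₂.1 (tc hy)
      have a1 := (le_abs_self _).trans (PowerNorm.abs_inner_le (k := k) (Finset.mem_coe.1 hu) x)
      have a2 : ⟪y - u, x⟫ ≤ 1 / (9 * R) * ‖x‖ := by
        refine (real_inner_le_norm _ _).trans ?_
        gcongr
        rw [← dist_eq_norm]; exact (Metric.mem_ball.1 hyu).le
      rw [inner_sub_left] at a2
      rw [real_inner_comm]; linarith
    have b2 := le_gauge_of_subset_closedBall h.absorbent R0.le hR (x := x)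
    have b3 : 1 / (9 * R) * ‖x‖ = (‖x‖ / R) / 9 := by field_simp
    linarith
  have hU : ∀ x : Euc n, x ≠ 0 → PowerNorm.nrm t k x ≠ 0 := fun x hx => by
    have := h.gauge_pos hx; have := hg x; linarith
  have δ0 : 0 < 1 / (16 * R ^ 2) := by positivity
  obtain ⟨Λ, hΛ⟩ := PowerNorm.dualityMap hU δ0
  have hc : ∀ x, ⟪PowerNorm.grad t k x + (1 / (16 * R ^ 2)) • x, x⟫ =
      PowerNorm.nrm t k x ^ 2 + 1 / (16 * R ^ 2) * ‖x‖ ^ 2 := fun x => by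
    rw [inner_add_left, PowerNorm.inner_grad_self, inner_smul_left, real_inner_self_eq_norm_sq,
      conj_trivial]
  refine ⟨_, Λ, hΛ, fun x => ?_, fun x hx => ?_⟩
  · rw [hc]
    have g0 : 0 ≤ gauge T x := gauge_nonneg x
    have a1 := hg x
    have : 4 / 5 * gauge T x ≤ PowerNorm.nrm t k x := by linarith
    have := pow_le_pow_left₀ (by positivity) this 2
    have : 0 ≤ 1 / (16 * R ^ 2) * ‖x‖ ^ 2 := by positivity
    linarith
  · rw [hc]
    have n0 := PowerNorm.nrm_nonneg (U := t) (k := k) x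
    have a1 : PowerNorm.nrm t k x ^ 2 ≤ 5 / 4 := by
      refine le_of_pow_le_pow_left₀ (n := k + 1) (by omega) (by norm_num) ?_
      rw [← pow_mul, show 2 * (k + 1) = 2 * k + 2 by ring, PowerNorm.nrm_pow]
      have : PowerNorm.N t k x ≤ t.card • (1 : ℝ) := by
        refine Finset.sum_le_card_nsmul _ _ _ fun u hu => ?_
        have i1 : ⟪u, x⟫ ≤ 1 := ht (Finset.mem_coe.2 hu) x hx
        have i2 : ⟪u, -x⟫ ≤ 1 := ht (Finset.mem_coe.2 hu) _ (h.sym x hx)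
        rw [inner_neg_right] at i2
        rw [← Even.pow_abs ⟨k + 1, by ring⟩]
        exact pow_le_one₀ (abs_nonneg _) (abs_le.2 ⟨by linarith, i1⟩)
      rw [nsmul_eq_mul, mul_one] at this
      refine this.trans (hk.le.trans ?_)
      exact pow_le_pow_right₀ (by norm_num) (by omega)
    have a2 : ‖x‖ ≤ R := by simpa using hR hx
    have a3 : 1 / (16 * R ^ 2) * ‖x‖ ^ 2 ≤ 1 / 16 := by
      calc _ ≤ 1 / (16 * R ^ 2) * R ^ 2 := by gcongr
        _ = 1 / 16 := by field_simp
    have : (5 / 4 : ℝ) + 1 / 16 ≤ (5 / 4) ^ 2 := by norm_num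
    linarith

/-- `DualityMap.lower` for a smooth norm close to the gauge of `T`; each of the two Gaussian integrals
is off by at most `(5/4)ⁿ`. -/
lemma gI_lower (h : SymBody T) (hn : n ≠ 0) : ENNReal.ofReal ((Real.pi / 2) ^ n) ≤
    ENNReal.ofReal ((25 / 16) ^ n) * (gI T * gI (polarBody T)) := by
  obtain ⟨G, Λ, hG, h1, h2⟩ := h.exists_dualityMap
  have hq : ∀ x, gauge (polarBody T) (G x) ≤ 5 / 4 * √⟪G x, x⟫ := by
    intro x
    rcases eq_or_ne x 0 with rfl | hx
    · simp [hG.zero]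
    have c0 : 0 < ⟪G x, x⟫ := lt_of_lt_of_le (by have := h.gauge_pos hx; positivity) (h1 x)
    have s0 := Real.sqrt_pos.2 c0
    have ss := Real.sq_sqrt c0.le
    set s := √⟪G x, x⟫
    refine gauge_polar_le (by positivity) fun z hz => ?_
    have a1 := hG.cs ((5 / 4 / s) • x) z
    have a2 := h2 z hz
    rw [hG.hom, inner_smul_left, inner_smul_left, inner_smul_right, conj_trivial, ← ss] at a1
    have a3 : 5 / 4 / s * (5 / 4 / s * s ^ 2) = (5 / 4) ^ 2 := by field_simp
    rw [a3] at a1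
    have a4 : 5 / 4 / s * ⟪G x, z⟫ ≤ (5 / 4) ^ 2 := by linarith
    rw [div_mul_eq_mul_div, div_le_iff₀ s0] at a4
    rw [real_inner_comm]; linarith
  have main := hG.lower hn (q := fun x => gauge (polarBody T) ((4 / 5 : ℝ) • x))
    (h.polar.continuous_gauge.comp (by fun_prop)) (fun x => gauge_nonneg _)
    (fun t x ht => by rw [smul_comm, gauge_smul_nonneg ht])
    (fun x y => by
      rw [smul_sub, sub_eq_add_neg]
      refine (gauge_add_le h.polar.conv h.polar.absorbent _ _).trans (le_of_eq ?_)
      rw [gauge_neg h.polar.sym])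
    (fun x => by
      rw [gauge_smul_nonneg (by norm_num)]
      have c0 := hG.nonneg x
      have : 4 / 5 * gauge (polarBody T) (G x) ≤ √⟪G x, x⟫ := by have := hq x; linarith
      have := pow_le_pow_left₀ (mul_nonneg (by norm_num) (gauge_nonneg _)) this 2
      rwa [Real.sq_sqrt c0] at this)
  have cg : ∀ {V : Set (Euc n)}, SymBody V →
      ∫⁻ x, ENNReal.ofReal (Real.exp (-(gauge V ((4 / 5 : ℝ) • x)) ^ 2)) =
        ENNReal.ofReal ((5 / 4) ^ n) * gI V := by
    intro V hV
    have := hV.continuous_gauge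
    rw [DualityMap.lintegral_smul (f := fun x => ENNReal.ofReal (Real.exp (-(gauge V x) ^ 2)))
      (Continuous.measurable (by fun_prop)).ennreal_ofReal (by norm_num), gI, ← inv_pow]
    norm_num
  rw [cg h.polar] at main
  refine main.trans ?_
  have i1 : ∫⁻ x, ENNReal.ofReal (Real.exp (-⟪G x, x⟫)) ≤ ENNReal.ofReal ((5 / 4) ^ n) * gI T := by
    rw [← cg h]
    refine lintegral_mono fun x => ENNReal.ofReal_le_ofReal (Real.exp_le_exp.2 (neg_le_neg ?_))
    rw [gauge_smul_nonneg (by norm_num)]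
    exact h1 x
  have e : ENNReal.ofReal ((25 / 16) ^ n) =
      ENNReal.ofReal ((5 / 4) ^ n) * ENNReal.ofReal ((5 / 4) ^ n) := by
    rw [← ENNReal.ofReal_mul (by positivity), ← mul_pow]; norm_num
  calc _ ≤ ENNReal.ofReal ((5 / 4) ^ n) * gI T * (ENNReal.ofReal ((5 / 4) ^ n) * gI (polarBody T)) := by
        gcongr
    _ = _ := by rw [e]; ring

/-- All volume products agree up to an exponential factor. -/
theorem mahler (hn : n ≠ 0) (hW : SymBody W) (hT : SymBody T) :
    volume W * volume (polarBody W) ≤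
      ENNReal.ofReal ((25 / 8) ^ n) * (volume T * volume (polarBody T)) := by
  have u := hW.gI_upper
  have l := hT.gI_lower hn
  rw [hW.gI_eq, hW.polar.gI_eq] at u
  rw [hT.gI_eq, hT.polar.gI_eq] at l
  set g := ENNReal.ofReal (Real.Gamma (n / 2 + 1)) with hg
  have g0 : g * g ≠ 0 := by
    have : 0 < Real.Gamma (n / 2 + 1) := Real.Gamma_pos_of_pos (by positivity)
    simp [hg, this]
  have g1 : g * g ≠ ∞ := by simp [hg, ENNReal.mul_eq_top]
  have e : Real.pi ^ n = 2 ^ n * (Real.pi / 2) ^ n := by rw [← mul_pow]; congr 1; ring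
  have e2 : ENNReal.ofReal ((25 / 8) ^ n) = ENNReal.ofReal (2 ^ n) * ENNReal.ofReal ((25 / 16) ^ n) := by
    rw [← ENNReal.ofReal_mul (by positivity), ← mul_pow]; norm_num
  rw [e, ENNReal.ofReal_mul (by positivity)] at u
  have := u.trans (mul_le_mul_right l _)
  refine (ENNReal.mul_le_mul_iff_right g0 g1).1 ?_
  calc _ = _ := by ring
    _ ≤ _ := this
    _ = _ := by rw [e2]; ring

end SymBody

/-! ### Volume estimates for covering numbers -/

section Covering
variable {n : ℕ}

lemma volume_smul {r : ℝ} (hr : 0 ≤ r) (A : Set (Euc n)) :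
    volume (r • A) = ENNReal.ofReal r ^ n * volume A := by
  rw [Measure.addHaar_smul_of_nonneg _ hr, finrank_euclideanSpace_fin, ENNReal.ofReal_pow hr]

lemma volume_two_smul (A : Set (Euc n)) : volume ((2 : ℝ) • A) = 2 ^ n * volume A := by
  rw [volume_smul (by norm_num)]; norm_num

lemma two_smul_half (A : Set (Euc n)) : (2 : ℝ) • (1 / 2 : ℝ) • A = A := by
  rw [smul_smul]; norm_num

/-- A `B`-separated subset of `A` of maximal cardinality is the set of centres of a cover, and the
translates of `B/2` about its points are disjoint subsets of `A + B/2`. -/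
lemma exists_cover {A B : Set (Euc n)} (hc : Convex ℝ B) (hs : ∀ x ∈ B, -x ∈ B)
    (hz : (0 : Euc n) ∈ B) (hm : MeasurableSet B)
    (h0 : volume B ≠ 0) (hf : volume (A + (1 / 2 : ℝ) • B) ≠ ∞) :
    ∃ Λ : Finset (Euc n), A ⊆ (Λ : Set (Euc n)) + B ∧
      Λ.card * volume B ≤ 2 ^ n * volume (A + (1 / 2 : ℝ) • B) := by
  classical
  have hB : volume B = 2 ^ n * volume ((1 / 2 : ℝ) • B) := by
    rw [← volume_two_smul, two_smul_half]
  set C := (1 / 2 : ℝ) • B with hC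
  have mC : MeasurableSet C := hm.const_smul_of_ne_zero (by norm_num)
  have C0 : volume C ≠ 0 := fun h => h0 (by rw [hB, h, mul_zero])
  have sep : ∀ Λ : Finset (Euc n), (Λ : Set (Euc n)) ⊆ A →
      (∀ x ∈ Λ, ∀ y ∈ Λ, x ≠ y → x - y ∉ B) → Λ.card * volume C ≤ volume (A + C) := by
    intro Λ hΛ hsep
    have d : (Λ : Set (Euc n)).PairwiseDisjoint fun x => x +ᵥ C := by
      intro x hx y hy hxy
      rw [Function.onFun, Set.disjoint_left]
      rintro z ⟨a, ⟨b, hb, rfl⟩, hz1⟩ ⟨a', ⟨b', hb', rfl⟩, hz2⟩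
      refine hsep x hx y hy hxy ?_
      have e : x - y = (1 / 2 : ℝ) • b' + (1 / 2 : ℝ) • (-b) := by
        simp only [vadd_eq_add] at hz1 hz2
        have hh : x + (1 / 2 : ℝ) • b = y + (1 / 2 : ℝ) • b' := hz1.trans hz2.symm
        rw [smul_neg, ← sub_eq_zero]
        rw [← sub_eq_zero] at hh
        rw [← hh]; abel
      rw [e]
      exact hc hb' (hs b hb) (by norm_num) (by norm_num) (by norm_num)
    have h1 := measure_biUnion_finset (μ := volume) d fun x _ => mC.const_vadd x
    simp only [measure_vadd, Finset.sum_const, nsmul_eq_mul] at h1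
    rw [← h1]
    refine measure_mono (Set.iUnion₂_subset fun x hx => ?_)
    rintro _ ⟨c, hc, rfl⟩
    exact ⟨x, hΛ hx, c, hc, rfl⟩
  obtain ⟨M, hM⟩ := ENNReal.exists_nat_gt (ENNReal.div_ne_top hf C0)
  set cards := {m : ℕ | ∃ Λ : Finset (Euc n), (Λ : Set (Euc n)) ⊆ A ∧
      (∀ x ∈ Λ, ∀ y ∈ Λ, x ≠ y → x - y ∉ B) ∧ Λ.card = m}
  have ne : cards.Nonempty := ⟨0, ∅, by simp, by simp, by simp⟩
  have bdd : BddAbove cards := by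
    refine ⟨M, ?_⟩
    rintro _ ⟨Λ, h1, h2, rfl⟩
    have h3 := (ENNReal.le_div_iff_mul_le (Or.inl C0) (Or.inr hf)).2 (sep Λ h1 h2)
    exact_mod_cast (h3.trans hM.le)
  obtain ⟨Λ, h1, h2, h3⟩ := Nat.sSup_mem ne bdd
  refine ⟨Λ, fun a ha => ?_, ?_⟩
  · by_contra hn
    have hn' : ∀ x ∈ Λ, a - x ∉ B := fun x hx hb => hn ⟨x, hx, a - x, hb, by simp⟩
    have ha' : a ∉ Λ := fun h => hn' a h (by simpa using hz)
    have hmem : Λ.card + 1 ∈ cards := by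
      refine ⟨insert a Λ, ?_, ?_, Finset.card_insert_of_notMem ha'⟩
      · rw [Finset.coe_insert]; exact Set.insert_subset ha h1
      · intro x hx y hy hxy
        rcases Finset.mem_insert.1 hx with hx' | hx' <;>
          rcases Finset.mem_insert.1 hy with hy' | hy'
        · exact absurd (hx'.trans hy'.symm) hxy
        · rw [hx']; exact hn' y hy'
        · rw [hy']; intro hb; exact hn' x hx' (by simpa using hs _ hb)
        · exact h2 x hx' y hy' hxy
    have := le_csSup bdd hmem
    omega
  · rw [hB]
    calc _ = 2 ^ n * (Λ.card * volume C) := by ring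
      _ ≤ _ := by gcongr; exact sep Λ h1 h2

lemma volume_le_of_cover {A B : Set (Euc n)} {Λ : Finset (Euc n)} (h : A ⊆ (Λ : Set (Euc n)) + B)
    {M : ℝ≥0∞} (hM : ∀ x : Euc n, volume (A ∩ (x +ᵥ B)) ≤ M) : volume A ≤ Λ.card * M := by
  have : A ⊆ ⋃ x ∈ Λ, A ∩ (x +ᵥ B) := by
    intro a ha
    obtain ⟨x, hx, b, hb, e⟩ := h ha
    exact Set.mem_iUnion₂.2 ⟨x, hx, ha, b, hb, e⟩
  refine (measure_mono this).trans ((measure_biUnion_finset_le _ _).trans ?_)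
  refine (Finset.sum_le_card_nsmul _ _ M fun x _ => hM x).trans (by rw [nsmul_eq_mul])

/-- If `Q - p ⊆ V` for every `p ∈ Q`, then `vol Q ≤ vol V`. -/
lemma volume_le_of_sub {Q V : Set (Euc n)} (h : ∀ p ∈ Q, ∀ z ∈ Q, z - p ∈ V) :
    volume Q ≤ volume V := by
  rcases Q.eq_empty_or_nonempty with rfl | ⟨p, hp⟩
  · simp
  rw [← measure_preimage_add_right volume p]
  refine measure_mono fun z hz => ?_
  simpa using h p hp _ hz

/-- If every finite cover of `A'` yields a cover of `A` with at most `cⁿ` times as many centres, then the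
covering numbers compare likewise, also when they are infinite. -/
lemma coveringNumber_le {A B A' B' : Set (Euc n)} {c : ℕ}
    (h : ∀ Λ : Finset (Euc n), A' ⊆ (Λ : Set (Euc n)) + B' →
      ∃ Λ' : Finset (Euc n), A ⊆ (Λ' : Set (Euc n)) + B ∧ (Λ'.card : ℝ≥0∞) ≤ c ^ n * Λ.card) (hc : c ≠ 0) :
    coveringNumber A B ≤ (c : ℕ∞) ^ n * coveringNumber A' B' := by
  rcases Set.eq_empty_or_nonempty
    {m : ℕ∞ | ∃ Λ : Finset (Euc n), (Λ.card : ℕ∞) = m ∧ A' ⊆ (Λ : Set (Euc n)) + B'} with h0 | h0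
  · rw [coveringNumber, coveringNumber, h0, sInf_empty, ENat.mul_top]
    · exact le_top
    · exact pow_ne_zero _ (by exact_mod_cast hc)
  · obtain ⟨Λ, h1, h2⟩ := csInf_mem h0
    obtain ⟨Λ', h3, h4⟩ := h Λ h2
    have h5 : coveringNumber A B ≤ Λ'.card := sInf_le ⟨Λ', rfl, h3⟩
    refine h5.trans ?_
    rw [coveringNumber, ← h1]
    exact_mod_cast h4

/-- The integral of the convolution of two indicator functions. -/
lemma volume_convolution {A B : Set (Euc n)} (hA : MeasurableSet A) (hB : MeasurableSet B) :
    ∫⁻ c, volume (A ∩ {x | c - x ∈ B}) = volume A * volume B := by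
  set E : Set (Euc n × Euc n) := {p | p.2 ∈ A ∧ p.1 - p.2 ∈ B} with hE
  have mE : MeasurableSet E := (measurable_snd hA).inter
    ((measurable_fst.sub measurable_snd) hB)
  have h1 : ∫⁻ c, volume (A ∩ {x | c - x ∈ B}) = (volume.prod volume) E :=
    (Measure.prod_apply mE).symm
  rw [h1, Measure.prod_apply_symm mE]
  have h2 : ∀ y, volume ((fun x => (x, y)) ⁻¹' E) = A.indicator (fun _ => volume B) y := by
    intro y
    by_cases hy : y ∈ A
    · rw [Set.indicator_of_mem hy, ← measure_preimage_add_right volume (-y) B]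
      congr 1; ext x; simp [hE, hy, sub_eq_add_neg]
    · rw [Set.indicator_of_notMem hy]
      convert measure_empty (μ := (volume : Measure (Euc n)))
      ext x; simp [hE, hy]
  simp only [h2]
  rw [lintegral_indicator hA, setLIntegral_const, mul_comm]

variable {K T : Set (Euc n)}

lemma IsConvexBody.symBody (h : IsConvexBody T) (hs : T = -T) : SymBody T := by
  obtain ⟨hc, hk, x, hx⟩ := h
  refine ⟨hc, hk, fun x hx => by rw [hs] at hx; exact hx, mem_interior_iff_mem_nhds.1 ?_⟩
  have hx' : -x ∈ interior T := by
    rw [mem_interior_iff_mem_nhds] at hx ⊢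
    have h1 := continuous_neg.tendsto (-x)
    rw [neg_neg] at h1
    filter_upwards [h1 hx] with y hy
    rw [hs]
    exact hy
  have := hc.interior hx hx' (by norm_num : (0 : ℝ) ≤ 1 / 2) (by norm_num : (0 : ℝ) ≤ 1 / 2) (by norm_num)
  simpa using this

lemma IsConvexBody.sub_symBody (h : IsConvexBody K) : SymBody (K - K) := by
  obtain ⟨hc, hk, x, hx⟩ := h
  refine ⟨hc.sub hc, by rw [sub_eq_add_neg]; exact hk.add hk.neg, ?_, ?_⟩
  · rintro _ ⟨a, ha, b, hb, rfl⟩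
    exact ⟨b, hb, a, ha, by simp⟩
  · have h1 := (continuous_const_add x).tendsto (0 : Euc n)
    rw [add_zero] at h1
    filter_upwards [h1 (mem_interior_iff_mem_nhds.1 hx)] with y hy
    exact ⟨x + y, hy, x, interior_subset hx, by simp⟩

lemma SymBody.add {V W : Set (Euc n)} (hV : SymBody V) (hW : SymBody W) : SymBody (V + W) := by
  refine ⟨hV.conv.add hW.conv, hV.comp.add hW.comp, ?_, ?_⟩
  · rintro _ ⟨a, ha, b, hb, rfl⟩
    exact ⟨-a, hV.sym a ha, -b, hW.sym b hb, by simp [add_comm]⟩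
  · exact Filter.mem_of_superset hV.nhds fun x hx => ⟨x, hx, 0, hW.zero_mem, by simp⟩

lemma SymBody.smul {V : Set (Euc n)} (hV : SymBody V) {r : ℝ} (hr : r ≠ 0) : SymBody (r • V) := by
  refine ⟨hV.conv.smul r, hV.comp.smul r, ?_, (set_smul_mem_nhds_zero_iff hr).2 hV.nhds⟩
  rintro _ ⟨a, ha, rfl⟩
  exact ⟨-a, hV.sym a ha, by simp⟩

lemma SymBody.volume_ne_zero {V : Set (Euc n)} (hV : SymBody V) : volume V ≠ 0 :=
  (Measure.measure_pos_of_mem_nhds volume hV.nhds).ne'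

lemma SymBody.volume_ne_top {V : Set (Euc n)} (hV : SymBody V) : volume V ≠ ∞ :=
  hV.comp.measure_ne_top

/-- A crude Rogers–Shephard inequality. -/
lemma volume_sub_le (h : IsConvexBody K) : volume (K - K) ≤ 4 ^ n * volume K := by
  obtain ⟨hc, hk, x, hx⟩ := h
  have mK := hk.measurableSet
  have k0 : volume K ≠ 0 := (Measure.measure_pos_of_mem_nhds volume (mem_interior_iff_mem_nhds.1 hx)).ne'
  have k1 : volume K ≠ ∞ := hk.measure_ne_top
  have h1 := volume_convolution mK mK.neg
  rw [Measure.measure_neg] at h1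
  have h2 : ∀ c ∈ (1 / 2 : ℝ) • (K - K), volume ((1 / 2 : ℝ) • K) ≤ volume (K ∩ {x | c - x ∈ -K}) := by
    rintro _ ⟨_, ⟨a, ha, b, hb, rfl⟩, rfl⟩
    rw [← measure_preimage_add_right volume (-((1 / 2 : ℝ) • a)) ((1 / 2 : ℝ) • K)]
    refine measure_mono ?_
    rintro z ⟨y, hy, hz⟩
    have hz : z = (1 / 2 : ℝ) • y + (1 / 2 : ℝ) • a := by
      rw [← sub_eq_iff_eq_add, sub_eq_add_neg]; exact hz.symm
    refine ⟨?_, ?_⟩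
    · rw [hz]; exact hc hy ha (by norm_num) (by norm_num) (by norm_num)
    · rw [Set.mem_ofPred_eq, Set.mem_neg]
      have : -((1 / 2 : ℝ) • (a - b) - z) = (1 / 2 : ℝ) • y + (1 / 2 : ℝ) • b := by
        rw [hz]; module
      beta_reduce
      rw [this]; exact hc hy hb (by norm_num) (by norm_num) (by norm_num)
  have h3 : volume ((1 / 2 : ℝ) • K) * volume ((1 / 2 : ℝ) • (K - K)) ≤ volume K * volume K := by
    rw [← h1, ← setLIntegral_const]
    refine (setLIntegral_mono' ?_ h2).trans (setLIntegral_le_lintegral _ _)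
    have : IsCompact (K - K) := by rw [sub_eq_add_neg]; exact hk.add hk.neg
    exact this.measurableSet.const_smul_of_ne_zero (by norm_num)
  have e : ∀ A : Set (Euc n), volume A = 2 ^ n * volume ((1 / 2 : ℝ) • A) := fun A => by
    rw [← volume_two_smul, two_smul_half]
  refine (ENNReal.mul_le_mul_iff_right k0 k1).1 ?_
  calc volume K * volume (K - K) = 4 ^ n * (volume ((1 / 2 : ℝ) • K) * volume ((1 / 2 : ℝ) • (K - K))) := by
        rw [e K, e (K - K), show (4 : ℝ≥0∞) = 2 * 2 by norm_num, mul_pow]; ring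
    _ ≤ 4 ^ n * (volume K * volume K) := by gcongr
    _ = _ := by ring

/-- A convex body contains a large symmetric one, up to translation. -/
lemma exists_symmetric_part (hn : n ≠ 0) (h : IsConvexBody K) :
    ∃ c, volume (K - K) ≤ 9 ^ n * volume (K ∩ {x | c - x ∈ K}) := by
  by_contra! hcon
  have hD := volume_sub_le h
  obtain ⟨hc, hk, x, hx⟩ := h
  have mK := hk.measurableSet
  have k0 : volume K ≠ 0 := (Measure.measure_pos_of_mem_nhds volume (mem_interior_iff_mem_nhds.1 hx)).ne'
  have k1 : volume K ≠ ∞ := hk.measure_ne_top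
  have h1 := volume_convolution mK mK
  have h2 : ∫⁻ c, volume (K ∩ {x | c - x ∈ K}) =
      ∫⁻ c in (2 : ℝ) • K, volume (K ∩ {x | c - x ∈ K}) := by
    refine (setLIntegral_eq_of_support_subset fun c hc' => ?_).symm
    have : (K ∩ {x | c - x ∈ K}).Nonempty := by
      by_contra hne
      exact hc' (by beta_reduce; rw [Set.not_nonempty_iff_eq_empty.1 hne, measure_empty])
    obtain ⟨y, hy, hy'⟩ := this
    refine ⟨(1 / 2 : ℝ) • y + (1 / 2 : ℝ) • (c - y), hc hy hy' (by norm_num) (by norm_num) (by norm_num), ?_⟩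
    module
  have h3 : 9 ^ n * (volume K * volume K) ≤ 8 ^ n * (volume K * volume K) := by
    have h1' := h2.symm.trans h1
    conv_lhs => rw [← h1', ← lintegral_const_mul' _ _ (by simp)]
    calc _ ≤ ∫⁻ c in (2 : ℝ) • K, 4 ^ n * volume K :=
          lintegral_mono fun c => (hcon c).le.trans hD
      _ = 4 ^ n * volume K * (2 ^ n * volume K) := by rw [setLIntegral_const, volume_two_smul]
      _ = 8 ^ n * (volume K * volume K) := by
          rw [show (8 : ℝ≥0∞) = 4 * 2 by norm_num, mul_pow]; ring
  have kk0 : volume K * volume K ≠ 0 := mul_ne_zero k0 k0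
  have kk1 : volume K * volume K ≠ ∞ := ENNReal.mul_ne_top k1 k1
  have h4 := (ENNReal.mul_le_mul_iff_left kk0 kk1).1 h3
  have h5 : (9 : ℕ) ^ n ≤ 8 ^ n := by exact_mod_cast h4
  exact absurd h5 (not_le.2 (Nat.pow_lt_pow_left (by norm_num) hn))

end Covering

/-! ### Duality of covering numbers -/

section Duality
variable {n : ℕ} {K T : Set (Euc n)}

/-- If `V ⊆ A° ∩ B°` then `V/2 ⊆ (A + B)°`. -/
lemma volume_le_volume_polar_add {A B V : Set (Euc n)} (hA : ∀ p ∈ V, ∀ a ∈ A, ⟪p, a⟫ ≤ 1)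
    (hB : ∀ p ∈ V, ∀ b ∈ B, ⟪p, b⟫ ≤ 1) : volume V ≤ 2 ^ n * volume (polarBody (A + B)) := by
  rw [← two_smul_half V, volume_two_smul]
  gcongr
  rintro _ ⟨p, hp, rfl⟩ _ ⟨a, ha, b, hb, rfl⟩
  change ⟪(1 / 2 : ℝ) • p, a + b⟫ ≤ 1
  rw [inner_smul_left, conj_trivial, inner_add_right]
  linarith [hA p hp a ha, hB p hp b hb]

lemma pow_mul_const_le {k m : ℕ} (h : (k : ℝ) * (25 / 8) ≤ m) :
    (k : ℝ≥0∞) ^ n * ENNReal.ofReal ((25 / 8) ^ n) ≤ (m : ℝ≥0∞) ^ n := by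
  rw [ENNReal.ofReal_pow (by norm_num), ← mul_pow]
  gcongr
  rw [← ENNReal.ofReal_natCast k, ← ENNReal.ofReal_natCast m, ← ENNReal.ofReal_mul (by positivity)]
  exact ENNReal.ofReal_le_ofReal h

lemma card_le_of_mul_le {a b k m : ℕ} {v w : ℝ≥0∞} (hv : v ≠ 0) (hv' : v ≠ ∞) (hw : w ≠ 0)
    (hw' : w ≠ ∞) (hkm : (k : ℝ) * (25 / 8) ≤ m)
    (h : a * (v * w) ≤ k ^ n * ENNReal.ofReal ((25 / 8) ^ n) * b * (v * w)) :
    (a : ℝ≥0∞) ≤ m ^ n * b := by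
  refine ((ENNReal.mul_le_mul_iff_left (mul_ne_zero hv hw) (ENNReal.mul_ne_top hv' hw')).1 h).trans ?_
  gcongr
  exact pow_mul_const_le hkm

/-- Volume of `T` against that of `2T ∩ (K - K)`, which contains the differences of points of
`T ∩ (x + K)` and is, up to scaling by `1/2`, contained in the polar of the body
`(K - K)° + T°/2` controlling a separated cover of `(K - K)°`. -/
theorem covering_polar_le (hn : n ≠ 0) (hK : IsConvexBody K) (hT : SymBody T) :
    coveringNumber (polarBody (K - K)) (polarBody T) ≤ (13 : ℕ) ^ n * coveringNumber T K := by
  have hD := hK.sub_symBody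
  refine coveringNumber_le (fun Λ hΛ => ?_) (by norm_num)
  have hh : SymBody ((1 / 2 : ℝ) • polarBody T) := hT.polar.smul (by norm_num)
  have hW := hD.polar.add hh
  have h1 : volume T ≤ Λ.card * volume (((2 : ℝ) • T) ∩ (K - K)) := by
    refine volume_le_of_cover hΛ fun x => volume_le_of_sub ?_
    rintro p ⟨hp, a, ha, rfl⟩ z ⟨hz, b, hb, rfl⟩
    refine ⟨⟨(1 / 2 : ℝ) • (x +ᵥ b) + (1 / 2 : ℝ) • (-(x +ᵥ a)),
      hT.conv hz (hT.sym _ hp) (by norm_num) (by norm_num) (by norm_num), ?_⟩, b, hb, a, ha, ?_⟩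
    · simp only [vadd_eq_add]; module
    · simp
  obtain ⟨Λ', h2, h3⟩ := exists_cover (A := polarBody (K - K)) hT.polar.conv hT.polar.sym
    hT.polar.zero_mem hT.polar.comp.measurableSet hT.polar.volume_ne_zero hW.volume_ne_top
  refine ⟨Λ', h2, ?_⟩
  have h4 : volume (((2 : ℝ) • T) ∩ (K - K)) ≤
      2 ^ n * volume (polarBody (polarBody (K - K) + (1 / 2 : ℝ) • polarBody T)) := by
    apply volume_le_volume_polar_add
    · intro p hp a ha
      rw [real_inner_comm]; exact ha p hp.2
    · rintro _ ⟨⟨t, ht, rfl⟩, -⟩ _ ⟨y, hy, rfl⟩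
      have := hy t ht
      change ⟪(2 : ℝ) • t, (1 / 2 : ℝ) • y⟫ ≤ 1
      rw [inner_smul_left, inner_smul_right, conj_trivial, real_inner_comm]
      linarith
  refine card_le_of_mul_le (k := 4) hT.volume_ne_zero hT.volume_ne_top hT.polar.volume_ne_zero
    hT.polar.volume_ne_top (by norm_num) ?_
  have h5 := SymBody.mahler hn hW hT
  set W := polarBody (K - K) + (1 / 2 : ℝ) • polarBody T
  set q := ENNReal.ofReal ((25 / 8) ^ n)
  calc (Λ'.card : ℝ≥0∞) * (volume T * volume (polarBody T))
      = (Λ'.card * volume (polarBody T)) * volume T := by ring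
    _ ≤ (2 ^ n * volume W) * (Λ.card * (2 ^ n * volume (polarBody W))) := by
        gcongr; exact h1.trans (by gcongr)
    _ = 4 ^ n * Λ.card * (volume W * volume (polarBody W)) := by
        rw [show (4 : ℝ≥0∞) = 2 * 2 by norm_num, mul_pow]; ring
    _ ≤ 4 ^ n * Λ.card * (q * (volume T * volume (polarBody T))) := by gcongr
    _ = _ := by push_cast; ring

/-- Volume of `(K - K)°` against that of `2 (T° ∩ (K - K)°)`, which is, up to scaling, contained in the
polar of `T + (K - K)`. The body `T` is covered by translates of a symmetric part of `K`. -/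
theorem covering_le_polar (hn : n ≠ 0) (hK : IsConvexBody K) (hT : SymBody T) :
    coveringNumber T K ≤ (289 : ℕ) ^ n * coveringNumber (polarBody (K - K)) (polarBody T) := by
  classical
  have hD := hK.sub_symBody
  refine coveringNumber_le (fun Λ hΛ => ?_) (by norm_num)
  have hW := hT.add hD
  have h1 : volume (polarBody (K - K)) ≤
      Λ.card * (2 ^ n * volume (polarBody T ∩ polarBody (K - K))) := by
    rw [← volume_two_smul]
    refine volume_le_of_cover hΛ fun x => volume_le_of_sub ?_
    rintro p ⟨hp, a, ha, rfl⟩ z ⟨hz, b, hb, rfl⟩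
    refine ⟨(1 / 2 : ℝ) • b + (1 / 2 : ℝ) • (-a), ⟨hT.polar.conv hb (hT.polar.sym _ ha)
      (by norm_num) (by norm_num) (by norm_num), ?_⟩, ?_⟩
    · have := hD.polar.conv hz (hD.polar.sym _ hp) (by norm_num : (0 : ℝ) ≤ 1 / 2)
        (by norm_num : (0 : ℝ) ≤ 1 / 2) (by norm_num)
      simp only [vadd_eq_add] at this
      convert this using 1
      module
    · simp only [vadd_eq_add]; module
  obtain ⟨c, hc⟩ := exists_symmetric_part hn hK
  obtain ⟨cK, kK, -⟩ := hK
  set S : Set (Euc n) := {z | (1 / 2 : ℝ) • c + z ∈ K ∧ (1 / 2 : ℝ) • c - z ∈ K} with hS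
  have vS : volume (K ∩ {x | c - x ∈ K}) = volume S := by
    rw [← measure_preimage_add volume ((1 / 2 : ℝ) • c)]
    congr 1; ext z
    have : c - ((1 / 2 : ℝ) • c + z) = (1 / 2 : ℝ) • c - z := by module
    simp only [Set.mem_preimage, Set.mem_inter_iff, Set.mem_ofPred_eq, hS, this]
  rw [vS] at hc
  have S0 : volume S ≠ 0 := fun h => hD.volume_ne_zero (by simpa [h] using hc)
  have sS : ∀ z ∈ S, -z ∈ S := fun z hz => ⟨by rw [← sub_eq_add_neg]; exact hz.2,
    by rw [sub_neg_eq_add]; exact hz.1⟩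
  have cS : Convex ℝ S := by
    intro x hx y hy a b ha hb hab
    constructor
    · convert cK hx.1 hy.1 ha hb hab using 1
      obtain rfl : b = 1 - a := by linarith
      module
    · convert cK hx.2 hy.2 ha hb hab using 1
      obtain rfl : b = 1 - a := by linarith
      module
  have zS : (0 : Euc n) ∈ S := by
    obtain ⟨z, hz⟩ := nonempty_of_measure_ne_zero S0
    have := cS hz (sS z hz) (by norm_num : (0 : ℝ) ≤ 1 / 2) (by norm_num : (0 : ℝ) ≤ 1 / 2)
      (by norm_num)
    simpa using this
  have mS : MeasurableSet S :=
    (((measurable_const_add _) kK.measurableSet).inter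
      ((measurable_const.sub measurable_id) kK.measurableSet))
  have sub : T + (1 / 2 : ℝ) • S ⊆ T + (K - K) := by
    refine Set.add_subset_add_left ?_
    rintro _ ⟨z, hz, rfl⟩
    have h : (1 / 2 : ℝ) • z = (1 / 4 : ℝ) • (((1 / 2 : ℝ) • c + z) - ((1 / 2 : ℝ) • c - z)) +
        (3 / 4 : ℝ) • 0 := by module
    change (1 / 2 : ℝ) • z ∈ K - K
    rw [h]
    exact hD.conv ⟨_, hz.1, _, hz.2, rfl⟩ hD.zero_mem (by norm_num) (by norm_num) (by norm_num)
  obtain ⟨Λ', h2, h3⟩ := exists_cover (A := T) cS sS zS mS S0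
    ((measure_mono sub).trans_lt (lt_top_iff_ne_top.2 hW.volume_ne_top)).ne
  refine ⟨Λ'.image fun x => x - (1 / 2 : ℝ) • c, ?_, ?_⟩
  · intro t ht
    obtain ⟨x, hx, z, hz, rfl⟩ := h2 ht
    refine ⟨x - (1 / 2 : ℝ) • c, by simpa using hx, _, hz.1, ?_⟩
    simp only; abel
  have hcard : ((Λ'.image fun x => x - (1 / 2 : ℝ) • c).card : ℝ≥0∞) ≤ Λ'.card := by
    exact_mod_cast Finset.card_image_le
  refine hcard.trans ?_
  have h4 : volume (polarBody T ∩ polarBody (K - K)) ≤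
      2 ^ n * volume (polarBody (T + (K - K))) :=
    volume_le_volume_polar_add (fun p hp => hp.1) fun p hp => hp.2
  refine card_le_of_mul_le (k := 72) hD.volume_ne_zero hD.volume_ne_top hD.polar.volume_ne_zero
    hD.polar.volume_ne_top (by norm_num) ?_
  have h5 := SymBody.mahler hn hW hD
  set W := T + (K - K)
  set D := K - K
  set q := ENNReal.ofReal ((25 / 8) ^ n)
  calc (Λ'.card : ℝ≥0∞) * (volume D * volume (polarBody D))
      ≤ Λ'.card * ((9 ^ n * volume S) * (Λ.card * (2 ^ n * (2 ^ n * volume (polarBody W))))) := by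
        gcongr; exact h1.trans (by gcongr)
    _ = (Λ'.card * volume S) * (36 ^ n * (Λ.card * volume (polarBody W))) := by
        rw [show (36 : ℝ≥0∞) = 9 * 2 * 2 by norm_num, mul_pow, mul_pow]; ring
    _ ≤ (2 ^ n * volume W) * (36 ^ n * (Λ.card * volume (polarBody W))) := by
        gcongr ?_ * _; exact h3.trans (by gcongr)
    _ = 72 ^ n * Λ.card * (volume W * volume (polarBody W)) := by
        rw [show (72 : ℝ≥0∞) = 2 * 36 by norm_num, mul_pow]; ring
    _ ≤ 72 ^ n * Λ.card * (q * (volume D * volume (polarBody D))) := by gcongr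
    _ = _ := by push_cast; ring

end Duality

theorem covering_number_difference_body_duality :
    ∃ n₀ : ℕ, ∀ n ≥ n₀, ∀ K T : Set (Euc n),
      IsConvexBody K → IsConvexBody T → T = -T →
      coveringNumber T K ≤ 289 ^ n * coveringNumber (polarBody (K - K)) (polarBody T) ∧
      coveringNumber (polarBody (K - K)) (polarBody T) ≤ 13 ^ n * coveringNumber T K := by
  refine ⟨1, fun n hn K T hK hT hs => ?_⟩
  have hn' : n ≠ 0 := by omega
  exact ⟨covering_le_polar hn' hK (hT.symBody hs), covering_polar_le hn' hK (hT.symBody hs)⟩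

end
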